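/- arXiv:2511.22165 — 2 statements merged into one kernel-verified Lean document; each statement's English description precedes it below -/
import Mathlib

section
/- Let p ≥ 1 and 1 ≤ r ≤ q < ∞, let {X_k}_{k≥1} and {Y_k}_{k≥1} be sequences of Banach spaces, and for each k let T_k : X_k → Y_k be an r-summing operator. If the sequence {π_r(T_k)}_{k≥1} belongs to ℓ^r, then the block-diagonal operator T : {x_k} ↦ {T_k(x_k)}, from the ℓ^p-direct sum ⊕_{ℓ^p} X_k to the ℓ^q-direct sum ⊕_{ℓ^q} Y_k, is r-summing, and π_r(T) ≤ (∑_{k=1}^∞ π_r(T_k)^r)^{1/r}. -/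
open MeasureTheory Metric Filter Complex
open scoped ENNReal NNReal BigOperators ComplexConjugate

noncomputable section

/-- `ℂⁿ` with the Euclidean norm. -/
abbrev En (n : ℕ) := EuclideanSpace ℂ (Fin n)

instance (n : ℕ) : InnerProductSpace ℝ (En n) := InnerProductSpace.complexToReal
instance (n : ℕ) : MeasurableSpace (En n) := borel _
instance (n : ℕ) : BorelSpace (En n) := ⟨rfl⟩
instance (n : ℕ) : FiniteDimensional ℝ (En n) := Module.Finite.trans ℂ (En n)

/-- The open unit ball `𝔹ₙ`. -/
def unitBall (n : ℕ) : Set (En n) := Metric.ball 0 1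

/-- The Hermitian pairing `⟨z,w⟩ = ∑ zⱼ conj wⱼ`. -/
def herm {n : ℕ} (z w : En n) : ℂ := ∑ j, z j * conj (w j)

/-- Normalized Lebesgue volume measure on `𝔹ₙ` (total mass 1). -/
def vMeas (n : ℕ) : Measure (En n) :=
  (volume (Metric.ball (0 : En n) 1))⁻¹ • volume.restrict (Metric.ball 0 1)

/-- The normalizing constant `c_α = Γ(n+1+α)/(n!·Γ(α+1))`. -/
def volConst (n : ℕ) (α : ℝ) : ℝ :=
  Real.Gamma (n + 1 + α) / ((n.factorial : ℝ) * Real.Gamma (α + 1))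

/-- The weighted measure `dv_α = c_α (1-|z|²)^α dv`. -/
def wMeas (n : ℕ) (α : ℝ) : Measure (En n) :=
  (vMeas n).withDensity fun z => ENNReal.ofReal (volConst n α * (1 - ‖z‖ ^ 2) ^ α)

-- The Möbius involution `φ_z` of `𝔹ₙ` interchanging `z` and `0`, evaluated at `w`.
open scoped Classical in
def mobius {n : ℕ} (z w : En n) : En n :=
  if z = 0 then -w
  else
    (1 - herm w z)⁻¹ •
      (z - (herm w z / herm z z) • z -
        ((Real.sqrt (1 - ‖z‖ ^ 2) : ℝ) : ℂ) • (w - (herm w z / herm z z) • z))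

/-- The Bergman metric on `𝔹ₙ`. -/
def bergmanDist {n : ℕ} (z w : En n) : ℝ :=
  (1 / 2) * Real.log ((1 + ‖mobius z w‖) / (1 - ‖mobius z w‖))

/-- The Bergman metric ball `B(z,r)`. -/
def bergmanBall {n : ℕ} (z : En n) (r : ℝ) : Set (En n) :=
  {w | w ∈ unitBall n ∧ bergmanDist z w < r}

/-- The Möbius invariant measure `dλ(z) = (1-|z|²)^{-(n+1)} dv(z)`. -/
def invMeas (n : ℕ) : Measure (En n) :=
  (vMeas n).withDensity fun z => ENNReal.ofReal ((1 - ‖z‖ ^ 2) ^ (-(n + 1 : ℝ)))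

/-- A sequence in `𝔹ₙ` which is separated (with separation constant `ε`)
in the Bergman metric. -/
def IsSeparated {n : ℕ} (a : ℕ → En n) (ε : ℝ) : Prop :=
  (∀ k, a k ∈ unitBall n) ∧ ∀ i j, i ≠ j → ε ≤ bergmanDist (a i) (a j)

/-- A `δ`-lattice in the Bergman metric. -/
def IsLattice {n : ℕ} (a : ℕ → En n) (δ : ℝ) : Prop :=
  (∀ k, a k ∈ unitBall n) ∧
    (∀ z ∈ unitBall n, ∃ k, z ∈ bergmanBall (a k) δ) ∧
      ∀ i j, i ≠ j → Disjoint (bergmanBall (a i) (δ / 4)) (bergmanBall (a j) (δ / 4))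

/-- `T` satisfies the `(r,s)`-summing inequality with constant `C`. -/
def SummingBoundWith (r s : ℝ) {X Y : Type*} [NormedAddCommGroup X] [NormedSpace ℂ X]
    [NormedAddCommGroup Y] (T : X → Y) (C : ℝ) : Prop :=
  ∀ (m : ℕ) (x : Fin m → X),
    (∑ k, ‖T (x k)‖ ^ r) ^ (1 / r) ≤
      C * ⨆ φ : {φ : X →L[ℂ] ℂ // ‖φ‖ ≤ 1}, (∑ k, ‖φ.1 (x k)‖ ^ s) ^ (1 / s)

/-- `T` is `(r,s)`-summing. -/
def IsSummingRS (r s : ℝ) {X Y : Type*} [NormedAddCommGroup X] [NormedSpace ℂ X]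
    [NormedAddCommGroup Y] (T : X → Y) : Prop :=
  ∃ C, 0 ≤ C ∧ SummingBoundWith r s T C

/-- The `(r,s)`-summing norm `π_{r,s}(T)`. -/
def summingNorm (r s : ℝ) {X Y : Type*} [NormedAddCommGroup X] [NormedSpace ℂ X]
    [NormedAddCommGroup Y] (T : X → Y) : ℝ :=
  sInf {C | 0 ≤ C ∧ SummingBoundWith r s T C}

/-- The subspace of `Lp` consisting of (a.e. classes of) functions having a representative
holomorphic on `Ω`. -/
def holoSubmodule (n : ℕ) (p : ℝ≥0∞) [Fact (1 ≤ p)] (Ω : Set (En n)) (μ : Measure (En n)) :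
    Submodule ℂ (Lp ℂ p μ) where
  carrier := {f | ∃ g : En n → ℂ, DifferentiableOn ℂ g Ω ∧ (f : En n → ℂ) =ᵐ[μ] g}
  zero_mem' := ⟨fun _ => 0, differentiableOn_const 0, Lp.coeFn_zero ℂ p μ⟩
  add_mem' := by
    rintro f f' ⟨g, hg, hfg⟩ ⟨g', hg', hfg'⟩
    exact ⟨g + g', hg.add hg', (Lp.coeFn_add f f').trans (hfg.add hfg')⟩
  smul_mem' := by
    rintro c f ⟨g, hg, hfg⟩
    exact ⟨c • g, hg.const_smul c, (Lp.coeFn_smul c f).trans (hfg.const_smul c)⟩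

/-- The weighted Bergman space `A^p_α` as a subspace of `L^p(dv_α)`. -/
abbrev BergmanSpace (n : ℕ) (p α : ℝ) [Fact (1 ≤ ENNReal.ofReal p)] :=
  ↥(holoSubmodule n (ENNReal.ofReal p) (unitBall n) (wMeas n α))

/-- The kernel `H_{p,z}(w) = (1-⟨z,w⟩)^{-b}`. -/
def Hker {n : ℕ} (b : ℝ) (z : En n) : En n → ℂ := fun w => (1 - herm z w) ^ (-(b : ℂ))

/-- The `L^p(dv_α)` norm of a function. -/
def lpNormOn (n : ℕ) (p α : ℝ) (g : En n → ℂ) : ℝ :=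
  (∫ w, ‖g w‖ ^ p ∂wMeas n α) ^ (1 / p)

/-- The normalized test function `h_{p,z} = H_{p,z}/‖H_{p,z}‖_{p,α}`
(with kernel exponent `b`). -/
def hTest (n : ℕ) (p α b : ℝ) (z : En n) : En n → ℂ := fun w =>
  Hker b z w / ((lpNormOn n p α (Hker b z) : ℝ) : ℂ)

/-- The `ℓ^s` norm of a sequence of reals, valued in `ℝ≥0∞`. -/
def ellNormE (s : ℝ) (b : ℕ → ℝ) : ℝ≥0∞ := (∑' k, ENNReal.ofReal (b k) ^ s) ^ (1 / s)

/-- The `ℓ^s` norm of a sequence of extended reals. -/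
def ellNormE' (s : ℝ) (b : ℕ → ℝ≥0∞) : ℝ≥0∞ := (∑' k, b k ^ s) ^ (1 / s)

/-- The `L^s(𝔹ₙ,dλ)` norm of a nonnegative function, valued in `ℝ≥0∞`. -/
def lamNormE (n : ℕ) (s : ℝ) (g : En n → ℝ) : ℝ≥0∞ :=
  (∫⁻ z, ENNReal.ofReal (g z) ^ s ∂invMeas n) ^ (1 / s)

/-- The Bergman projection `P_β`. -/
def bergmanProj (n : ℕ) (β : ℝ) (f : En n → ℂ) (z : En n) : ℂ :=
  ∫ w, f w * (1 - herm z w) ^ (-((n : ℂ) + 1 + (β : ℂ))) ∂wMeas n β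

/-- The conjugate Bergman projection. -/
def conjBergmanProj (n : ℕ) (β : ℝ) (f : En n → ℂ) (z : En n) : ℂ :=
  ∫ w, f w * (1 - herm w z) ^ (-((n : ℂ) + 1 + (β : ℂ))) ∂wMeas n β

/-- `g` is bounded and holomorphic on `𝔹ₙ`. -/
def BoundedHolo (n : ℕ) (g : En n → ℂ) : Prop :=
  DifferentiableOn ℂ g (unitBall n) ∧ ∃ M, ∀ z ∈ unitBall n, ‖g z‖ ≤ M

/-- The big Hankel operator `H^β_f(g) = f g - P_β(f g)` at the level of functions. -/
def hankelFun (n : ℕ) (β : ℝ) (f g : En n → ℂ) : En n → ℂ := fun z =>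
  f z * g z - bergmanProj n β (fun w => f w * g w) z

/-- The little Hankel operator `h^β_f(g) = conj-P_β(f g)` at the level of functions. -/
def littleHankelFun (n : ℕ) (β : ℝ) (f g : En n → ℂ) : En n → ℂ :=
  conjBergmanProj n β fun w => f w * g w

/-- `T : A^p_α → L^q(dv_β)` extends the big Hankel operator `H^β_f` from the
bounded holomorphic functions. -/
def ExtendsBigHankel (n : ℕ) (p q α β : ℝ) [Fact (1 ≤ ENNReal.ofReal p)]
    [Fact (1 ≤ ENNReal.ofReal q)] (f : En n → ℂ)
    (T : BergmanSpace n p α → Lp ℂ (ENNReal.ofReal q) (wMeas n β)) : Prop :=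
  ∀ g : En n → ℂ, BoundedHolo n g →
    ∀ G : BergmanSpace n p α,
      ((G : Lp ℂ (ENNReal.ofReal p) (wMeas n α)) : En n → ℂ) =ᵐ[wMeas n α] g →
        (T G : En n → ℂ) =ᵐ[wMeas n β] hankelFun n β f g

/-- `T : A^p_α → L^q(dv_β)` extends the little Hankel operator `h^β_f` from the
bounded holomorphic functions. -/
def ExtendsLittleHankel (n : ℕ) (p q α β : ℝ) [Fact (1 ≤ ENNReal.ofReal p)]
    [Fact (1 ≤ ENNReal.ofReal q)] (f : En n → ℂ)
    (T : BergmanSpace n p α → Lp ℂ (ENNReal.ofReal q) (wMeas n β)) : Prop :=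
  ∀ g : En n → ℂ, BoundedHolo n g →
    ∀ G : BergmanSpace n p α,
      ((G : Lp ℂ (ENNReal.ofReal p) (wMeas n α)) : En n → ℂ) =ᵐ[wMeas n α] g →
        (T G : En n → ℂ) =ᵐ[wMeas n β] littleHankelFun n β f g

/-- `J : A^p_α → L^q(dμ)` represents the Carleson embedding `J_μ f = f`. -/
def RepresentsEmbedding (n : ℕ) (p q α : ℝ) [Fact (1 ≤ ENNReal.ofReal p)]
    [Fact (1 ≤ ENNReal.ofReal q)] (μ : Measure (En n))
    (J : BergmanSpace n p α → Lp ℂ (ENNReal.ofReal q) μ) : Prop :=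
  ∀ (G : BergmanSpace n p α) (g : En n → ℂ), DifferentiableOn ℂ g (unitBall n) →
    ((G : Lp ℂ (ENNReal.ofReal p) (wMeas n α)) : En n → ℂ) =ᵐ[wMeas n α] g →
      (J G : En n → ℂ) =ᵐ[μ] g

/-- The IDA function `G_{q,δ}(f)(z)`. -/
def Gq (n : ℕ) (q δ : ℝ) (f : En n → ℂ) (z : En n) : ℝ :=
  ⨅ h : {h : En n → ℂ // DifferentiableOn ℂ h (bergmanBall z δ)},
    ((vMeas n (bergmanBall z δ)).toReal⁻¹ *
        ∫ w in bergmanBall z δ, ‖f w - h.1 w‖ ^ q ∂vMeas n) ^ (1 / q)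

/-- The average of `f` over the Bergman ball `B(z,δ)`. -/
def ballAvg (n : ℕ) (δ : ℝ) (f : En n → ℂ) (z : En n) : ℂ :=
  ((vMeas n (bergmanBall z δ)).toReal⁻¹ : ℝ) • ∫ w in bergmanBall z δ, f w ∂vMeas n

/-- The local mean oscillation `MO_{q,δ}(f)(z)`. -/
def MOq (n : ℕ) (q δ : ℝ) (f : En n → ℂ) (z : En n) : ℝ :=
  ((vMeas n (bergmanBall z δ)).toReal⁻¹ *
      ∫ w in bergmanBall z δ, ‖f w - ballAvg n δ f z‖ ^ q ∂vMeas n) ^ (1 / q)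

/-- The integral operator `V_{b,β}`. -/
def Vop (n : ℕ) (b β : ℝ) (f : En n → ℂ) (z : En n) : ℂ :=
  ((volConst n (b + β) / volConst n β : ℝ) : ℂ) * (((1 - ‖z‖ ^ 2) ^ b : ℝ) : ℂ) *
    ∫ w, f w * (1 - herm z w) ^ (-((n : ℂ) + 1 + (β : ℂ) + (b : ℂ))) ∂wMeas n β

/-- The norm of the invariant gradient `|∇̃f(z)| = |∇(f ∘ φ_z)(0)|`. -/
def invGradNorm (n : ℕ) (f : En n → ℂ) (z : En n) : ℝ :=
  ‖fderiv ℂ (fun w => f (mobius z w)) 0‖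

/-- The Besov space norm `‖f‖_{B^γ_s}`, valued in `ℝ≥0∞`. -/
def besovNorm (n : ℕ) (s γ : ℝ) (f : En n → ℂ) : ℝ≥0∞ :=
  (∫⁻ z, ENNReal.ofReal ((1 - ‖z‖ ^ 2) ^ γ * invGradNorm n f z) ^ s ∂invMeas n) ^ (1 / s)

/-!
Let `w x` be the weak `ℓ^s` norm of a finite family `x` in `⊕_{ℓ^p} X_k`. The coordinate maps are
contractions, so the `k`-th coordinates of `x` form a family of weak norm at most `w x`, and the
summing inequality of `T_k` bounds `∑ i, ‖T_k (x_i k)‖ ^ r` by `π(T_k) ^ r * (w x) ^ r`. Sum over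
`k`: since `r ≤ q`, the `ℓ^q` norm of `T x_i` is at most its `ℓ^r` norm, whose `r`-th power is
additive in `k`, so that the two sums can be interchanged.
-/

lemma sum_rpow_le_rpow_sum {ι : Type*} {t : ℝ} (ht : 1 ≤ t) (s : Finset ι) {a : ι → ℝ}
    (ha : ∀ i ∈ s, 0 ≤ a i) : ∑ i ∈ s, a i ^ t ≤ (∑ i ∈ s, a i) ^ t := by
  classical
  induction s using Finset.induction_on with
  | empty => simp [Real.zero_rpow (zero_lt_one.trans_le ht).ne']
  | insert j s hj ih =>
    obtain ⟨haj, has⟩ := Finset.forall_mem_insert _ _ _ |>.1 ha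
    rw [Finset.sum_insert hj, Finset.sum_insert hj]
    calc a j ^ t + ∑ i ∈ s, a i ^ t
        ≤ a j ^ t + (∑ i ∈ s, a i) ^ t := by grw [ih has]
      _ ≤ (a j + ∑ i ∈ s, a i) ^ t :=
          Real.add_rpow_le_rpow_add haj (Finset.sum_nonneg has) ht

section LpNorm

variable {ι : Type*} {E : ι → Type*} [∀ i, NormedAddCommGroup (E i)] {r : ℝ} {q : ℝ≥0∞}

lemma lp_norm_le_tsum_rpow_of_exponent_le (hr : 0 < r) (hrq : ENNReal.ofReal r ≤ q) (f : lp E q)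
    (hf : Summable fun i => ‖f i‖ ^ r) : ‖f‖ ≤ (∑' i, ‖f i‖ ^ r) ^ (1 / r) := by
  have hnonneg : 0 ≤ ∑' i, ‖f i‖ ^ r := tsum_nonneg fun i => by positivity
  rcases eq_or_ne q ∞ with rfl | hq
  · refine lp.norm_le_of_forall_le (by positivity) fun i => ?_
    rw [one_div, Real.le_rpow_inv_iff_of_pos (norm_nonneg _) hnonneg hr]
    exact hf.le_tsum i fun j _ => by positivity
  · have hrq' : r ≤ q.toReal := (ENNReal.ofReal_le_iff_le_toReal hq).1 hrq
    have hratio (a : ℝ) (ha : 0 ≤ a) : (a ^ r) ^ (q.toReal / r) = a ^ q.toReal := by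
      rw [← Real.rpow_mul ha, mul_div_cancel₀ _ hr.ne']
    refine lp.norm_le_of_forall_sum_le (hr.trans_le hrq') (by positivity) fun s => ?_
    calc ∑ i ∈ s, ‖f i‖ ^ q.toReal
        = ∑ i ∈ s, (‖f i‖ ^ r) ^ (q.toReal / r) :=
          Finset.sum_congr rfl fun i _ => (hratio _ (norm_nonneg _)).symm
      _ ≤ (∑ i ∈ s, ‖f i‖ ^ r) ^ (q.toReal / r) :=
          sum_rpow_le_rpow_sum ((one_le_div hr).2 hrq') s fun i _ => by positivity
      _ ≤ (∑' i, ‖f i‖ ^ r) ^ (q.toReal / r) := by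
          gcongr
          exact hf.sum_le_tsum s fun i _ => by positivity
      _ = ((∑' i, ‖f i‖ ^ r) ^ (1 / r)) ^ q.toReal := by
          rw [← Real.rpow_mul hnonneg, one_div_mul_eq_div]

lemma lp_norm_rpow_le_tsum_of_exponent_le (hr : 0 < r) (hrq : ENNReal.ofReal r ≤ q) (f : lp E q)
    (hf : Summable fun i => ‖f i‖ ^ r) : ‖f‖ ^ r ≤ ∑' i, ‖f i‖ ^ r := by
  rw [← Real.le_rpow_inv_iff_of_pos (lp.norm_nonneg' f) (tsum_nonneg fun i => by positivity) hr,
    ← one_div]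
  exact lp_norm_le_tsum_rpow_of_exponent_le hr hrq f hf

lemma memℓp_of_summable_norm_rpow (hr : 0 < r) (hrq : ENNReal.ofReal r ≤ q) {f : ∀ i, E i}
    (hf : Summable fun i => ‖f i‖ ^ r) : Memℓp f q := by
  refine Memℓp.of_exponent_ge (memℓp_gen ?_) hrq
  rwa [ENNReal.toReal_ofReal hr.le]

end LpNorm

section WeakLpNorm

variable {𝕜 X Z κ : Type*} [NontriviallyNormedField 𝕜] [SeminormedAddCommGroup X]
  [NormedSpace 𝕜 X] [SeminormedAddCommGroup Z] [NormedSpace 𝕜 Z] [Fintype κ] {s : ℝ}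

variable (𝕜) in
/-- The weak `ℓ^s` norm of a finite family of vectors: the supremum, over the functionals `φ` of
norm at most `1`, of the `ℓ^s` norm of the scalar family `φ ∘ x`. It is the factor multiplying the
constant on the right-hand side of `SummingBoundWith`. -/
def weakLpNorm (s : ℝ) (x : κ → X) : ℝ :=
  ⨆ φ : {φ : X →L[𝕜] 𝕜 // ‖φ‖ ≤ 1}, (∑ i, ‖φ.1 (x i)‖ ^ s) ^ (1 / s)

lemma weakLpNorm_nonneg (x : κ → X) : 0 ≤ weakLpNorm 𝕜 s x :=
  Real.iSup_nonneg fun _ => by positivity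

lemma bddAbove_range_weakLpNorm (hs : 0 ≤ s) (x : κ → X) :
    BddAbove (Set.range fun φ : {φ : X →L[𝕜] 𝕜 // ‖φ‖ ≤ 1} =>
      (∑ i, ‖φ.1 (x i)‖ ^ s) ^ (1 / s)) := by
  refine ⟨(∑ i, ‖x i‖ ^ s) ^ (1 / s), ?_⟩
  rintro _ ⟨⟨φ, hφ⟩, rfl⟩
  dsimp only
  gcongr with i
  simpa only [one_mul] using φ.le_of_opNorm_le hφ (x i)

lemma weakLpNorm_map_le (hs : 0 ≤ s) {L : X →L[𝕜] Z} (hL : ‖L‖ ≤ 1) (x : κ → X) :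
    weakLpNorm 𝕜 s (fun i => L (x i)) ≤ weakLpNorm 𝕜 s x :=
  Real.iSup_le
    (fun φ => le_ciSup (bddAbove_range_weakLpNorm hs x)
      ⟨φ.1.comp L, (φ.1.opNorm_comp_le L).trans (mul_le_one₀ φ.2 (norm_nonneg _) hL)⟩)
    (weakLpNorm_nonneg x)

lemma weakLpNorm_lp_apply_le {ι : Type*} {E : ι → Type*} [∀ k, NormedAddCommGroup (E k)]
    [∀ k, NormedSpace 𝕜 (E k)] {p : ℝ≥0∞} [Fact (1 ≤ p)] (hs : 0 ≤ s) (x : κ → lp E p) (k : ι) :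
    weakLpNorm 𝕜 s (fun i => x i k) ≤ weakLpNorm 𝕜 s x := by
  have heval : ‖lp.evalCLM 𝕜 E p k‖ ≤ 1 :=
    ContinuousLinearMap.opNorm_le_bound _ zero_le_one fun f =>
      (lp.norm_apply_le_norm (zero_lt_one.trans_le Fact.out).ne' f k).trans_eq (one_mul _).symm
  exact weakLpNorm_map_le hs heval x

end WeakLpNorm

section Summing

variable {X Y : Type*} [NormedAddCommGroup X] [NormedSpace ℂ X] [NormedAddCommGroup Y]
  {r s C : ℝ} {T : X → Y}

lemma summingBoundWith_iff_sum_rpow_le (hr : 0 < r) (hC : 0 ≤ C) :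
    SummingBoundWith r s T C ↔
      ∀ (m : ℕ) (x : Fin m → X), ∑ i, ‖T (x i)‖ ^ r ≤ C ^ r * weakLpNorm ℂ s x ^ r := by
  refine forall₂_congr fun m x => ?_
  have hw : 0 ≤ weakLpNorm ℂ s x := weakLpNorm_nonneg x
  rw [← Real.mul_rpow hC hw,
    ← Real.rpow_inv_le_iff_of_pos (by positivity) (mul_nonneg hC hw) hr, ← one_div, weakLpNorm]

lemma summingNorm_nonneg (r s : ℝ) (T : X → Y) : 0 ≤ summingNorm r s T :=
  Real.sInf_nonneg fun _ hC => hC.1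

lemma IsSummingRS.summingBoundWith_summingNorm (hT : IsSummingRS r s T) :
    SummingBoundWith r s T (summingNorm r s T) := by
  have hclosed : IsClosed {C : ℝ | 0 ≤ C ∧ SummingBoundWith r s T C} := by
    simp only [SummingBoundWith, Set.ofPred_and, Set.ofPred_forall]
    refine isClosed_Ici.inter (isClosed_iInter fun m => isClosed_iInter fun x => ?_)
    exact isClosed_le continuous_const (continuous_id.mul continuous_const)
  exact (hclosed.csInf_mem hT ⟨0, fun _ hC => hC.1⟩).2

end Summing

/-- The block-diagonal operator `{x_k} ↦ {T_k x_k}` from the `ℓ^p`-direct sum of the `X_k` to the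
`ℓ^q`-direct sum of the `Y_k`; that `{T_k x_k}` lies in the latter is the hypothesis `hT`. -/
def lpBlockDiagonal {𝕜 ι : Type*} [NormedRing 𝕜] {X Y : ι → Type*} [∀ k, NormedAddCommGroup (X k)]
    [∀ k, Module 𝕜 (X k)] [∀ k, IsBoundedSMul 𝕜 (X k)] [∀ k, NormedAddCommGroup (Y k)]
    [∀ k, Module 𝕜 (Y k)] [∀ k, IsBoundedSMul 𝕜 (Y k)] {p q : ℝ≥0∞} (T : ∀ k, X k →ₗ[𝕜] Y k)
    (hT : ∀ x : lp X p, Memℓp (fun k => T k (x k)) q) : lp X p →ₗ[𝕜] lp Y q where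
  toFun x := ⟨fun k => T k (x k), hT x⟩
  map_add' x y := lp.ext <| funext fun k => map_add (T k) (x k) (y k)
  map_smul' c x := lp.ext <| funext fun k => map_smul (T k) c (x k)

section Diagonal

variable {ι : Type*} {X : ι → Type*} [∀ k, NormedAddCommGroup (X k)] [∀ k, NormedSpace ℂ (X k)]
  {p : ℝ≥0∞} [Fact (1 ≤ p)] {r s : ℝ}

lemma SummingBoundWith.sum_lp_apply_rpow_le {F : Type*} [NormedAddCommGroup F] {k : ι}
    {T : X k → F} {C : ℝ} (hT : SummingBoundWith r s T C) (hr : 0 < r) (hs : 0 ≤ s) (hC : 0 ≤ C)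
    {m : ℕ} (x : Fin m → lp X p) :
    ∑ i, ‖T (x i k)‖ ^ r ≤ C ^ r * weakLpNorm ℂ s x ^ r := by
  calc ∑ i, ‖T (x i k)‖ ^ r
      ≤ C ^ r * weakLpNorm ℂ s (fun i => x i k) ^ r :=
        (summingBoundWith_iff_sum_rpow_le hr hC).1 hT m fun i => x i k
    _ ≤ C ^ r * weakLpNorm ℂ s x ^ r := by
        gcongr
        · exact weakLpNorm_nonneg _
        · exact weakLpNorm_lp_apply_le hs x k

variable {Y : ι → Type*} [∀ k, NormedAddCommGroup (Y k)] {T : ∀ k, X k → Y k} {C : ι → ℝ}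

lemma summable_norm_rpow_of_summingBoundWith (hr : 0 < r) (hs : 0 ≤ s) (hC : ∀ k, 0 ≤ C k)
    (hT : ∀ k, SummingBoundWith r s (T k) (C k)) (hsum : Summable fun k => C k ^ r)
    (x : lp X p) : Summable fun k => ‖T k (x k)‖ ^ r := by
  refine .of_nonneg_of_le (fun k => by positivity) (fun k => ?_)
    (hsum.mul_right (weakLpNorm ℂ s (fun _ : Fin 1 => x) ^ r))
  simpa only [Fin.sum_univ_one] using (hT k).sum_lp_apply_rpow_le hr hs (hC k) fun _ : Fin 1 => x

theorem summingBoundWith_of_forall_apply_eq {q : ℝ≥0∞} [Fact (1 ≤ q)] (hr : 0 < r)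
    (hs : 0 ≤ s) (hrq : ENNReal.ofReal r ≤ q) (hC : ∀ k, 0 ≤ C k)
    (hT : ∀ k, SummingBoundWith r s (T k) (C k)) (hsum : Summable fun k => C k ^ r)
    {S : lp X p → lp Y q} (hS : ∀ x k, S x k = T k (x k)) :
    SummingBoundWith r s S ((∑' k, C k ^ r) ^ (1 / r)) := by
  have htsum : 0 ≤ ∑' k, C k ^ r := tsum_nonneg fun k => Real.rpow_nonneg (hC k) r
  have hsummable (x : lp X p) : Summable fun k => ‖S x k‖ ^ r := by
    simpa only [hS] using summable_norm_rpow_of_summingBoundWith hr hs hC hT hsum x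
  have hcoord {m : ℕ} (x : Fin m → lp X p) (k : ι) :
      ∑ i, ‖S (x i) k‖ ^ r ≤ C k ^ r * weakLpNorm ℂ s x ^ r := by
    simpa only [hS] using (hT k).sum_lp_apply_rpow_le hr hs (hC k) x
  rw [summingBoundWith_iff_sum_rpow_le hr (by positivity), one_div,
    Real.rpow_inv_rpow htsum hr.ne']
  intro m x
  calc ∑ i, ‖S (x i)‖ ^ r
      ≤ ∑ i, ∑' k, ‖S (x i) k‖ ^ r :=
        Finset.sum_le_sum fun i _ =>
          lp_norm_rpow_le_tsum_of_exponent_le hr hrq (S (x i)) (hsummable (x i))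
    _ = ∑' k, ∑ i, ‖S (x i) k‖ ^ r :=
        (Summable.tsum_finsetSum fun i _ => hsummable (x i)).symm
    _ ≤ ∑' k, C k ^ r * weakLpNorm ℂ s x ^ r :=
        (summable_sum fun i _ => hsummable (x i)).tsum_le_tsum (hcoord x) (hsum.mul_right _)
    _ = (∑' k, C k ^ r) * weakLpNorm ℂ s x ^ r := tsum_mul_right

end Diagonal

theorem statement4_general {ι : Type*} {p q : ℝ≥0∞} [Fact (1 ≤ p)] [Fact (1 ≤ q)] {r s : ℝ}
    (hr : 0 < r) (hs : 0 < s) (hrq : ENNReal.ofReal r ≤ q) {X Y : ι → Type*}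
    [∀ k, NormedAddCommGroup (X k)] [∀ k, NormedSpace ℂ (X k)]
    [∀ k, NormedAddCommGroup (Y k)] [∀ k, NormedSpace ℂ (Y k)]
    (T : ∀ k, X k →ₗ[ℂ] Y k) (hT : ∀ k, IsSummingRS r s ⇑(T k))
    (hsum : Summable fun k => summingNorm r s ⇑(T k) ^ r) :
    ∃ S : lp X p →ₗ[ℂ] lp Y q, (∀ x k, S x k = T k (x k)) ∧
      SummingBoundWith r s ⇑S ((∑' k, summingNorm r s ⇑(T k) ^ r) ^ (1 / r)) := by
  have hnonneg (k : ι) : 0 ≤ summingNorm r s ⇑(T k) := summingNorm_nonneg r s _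
  have hbound (k : ι) : SummingBoundWith r s ⇑(T k) (summingNorm r s ⇑(T k)) :=
    (hT k).summingBoundWith_summingNorm
  have hmem (x : lp X p) : Memℓp (fun k => T k (x k)) q :=
    memℓp_of_summable_norm_rpow hr hrq
      (summable_norm_rpow_of_summingBoundWith hr hs.le hnonneg hbound hsum x)
  exact ⟨lpBlockDiagonal T hmem, fun _ _ => rfl,
    summingBoundWith_of_forall_apply_eq hr hs.le hrq hnonneg hbound hsum fun _ _ => rfl⟩

theorem statement4 (p q r : ℝ) (hp : 1 ≤ p) (hr : 1 ≤ r) (hrq : r ≤ q)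
    (X Y : ℕ → Type*) [∀ k, NormedAddCommGroup (X k)] [∀ k, NormedSpace ℂ (X k)]
    [∀ k, NormedAddCommGroup (Y k)] [∀ k, NormedSpace ℂ (Y k)]
    [Fact (1 ≤ ENNReal.ofReal p)] [Fact (1 ≤ ENNReal.ofReal q)]
    (Tk : ∀ k, X k →ₗ[ℂ] Y k) (hTk : ∀ k, IsSummingRS r r ⇑(Tk k))
    (hsum : Summable fun k => summingNorm r r ⇑(Tk k) ^ r) :
    ∃ T : lp X (ENNReal.ofReal p) →ₗ[ℂ] lp Y (ENNReal.ofReal q),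
      (∀ x k, (T x) k = Tk k (x k)) ∧
        SummingBoundWith r r ⇑T ((∑' k, summingNorm r r ⇑(Tk k) ^ r) ^ (1 / r)) := by
  have hr0 : 0 < r := zero_lt_one.trans_le hr
  exact statement4_general hr0 hr0 (ENNReal.ofReal_le_ofReal hrq) Tk hTk hsum
end
end

section
/- Let n ≥ 1, α > −1, p, q ≥ 1, δ > 0, let {a_k} be a δ-lattice in 𝔹ₙ, and let μ be a positive Borel measure on 𝔹ₙ. Fix an index k and assume (1−|a_k|²)^{−(n+1+α)q/p} μ(B(a_k,δ)) < ∞. Define S_k(f) = f restricted to B(a_k,δ). Then S_k is a 1-summing operator from A^p(B(a_k,3δ), dv_α) (holomorphic functions on B(a_k,3δ) that are p-integrable with respect to v_α) to L^q(B(a_k,δ), dμ), and π_1(S_k) ≤ C (1−|a_k|²)^{−(n+1+α)/p} μ(B(a_k,δ))^{1/q} for a constant C depending only on n, p, q, α, δ. -/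
open MeasureTheory Metric Filter Complex
open scoped ENNReal NNReal BigOperators ComplexConjugate

noncomputable section

/-- `S` represents the restriction operator `f ↦ f|_{B(a_k,δ)}` from
`A^p(B(a_k,3δ),dv_α)` to `L^q(B(a_k,δ),dμ)`. -/
def RepRestriction (n : ℕ) (p q α δ : ℝ) [Fact (1 ≤ ENNReal.ofReal p)]
    [Fact (1 ≤ ENNReal.ofReal q)] (μ : Measure (En n)) (ak : En n)
    (S : ↥(holoSubmodule n (ENNReal.ofReal p) (bergmanBall ak (3 * δ))
          ((wMeas n α).restrict (bergmanBall ak (3 * δ)))) →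
        Lp ℂ (ENNReal.ofReal q) (μ.restrict (bergmanBall ak δ))) : Prop :=
  ∀ F : ↥(holoSubmodule n (ENNReal.ofReal p) (bergmanBall ak (3 * δ))
      ((wMeas n α).restrict (bergmanBall ak (3 * δ)))),
    ∀ g : En n → ℂ, DifferentiableOn ℂ g (bergmanBall ak (3 * δ)) →
      ((F : Lp ℂ (ENNReal.ofReal p) ((wMeas n α).restrict (bergmanBall ak (3 * δ)))) :
          En n → ℂ) =ᵐ[(wMeas n α).restrict (bergmanBall ak (3 * δ))] g →
      ((S F : Lp ℂ (ENNReal.ofReal q) (μ.restrict (bergmanBall ak δ))) : En n → ℂ)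
        =ᵐ[μ.restrict (bergmanBall ak δ)] g

/-!
After an affine change of variables the Bergman balls centred at `a` become ellipsoids
`chartBall a (tanh r)`, which have size comparable to `1` uniformly in `a`, and the change of
variables has constant Jacobian `(1 - |a|²)^(n+1)`. Hence the sub-mean value property on Euclidean
balls gives, for `r < R` and with `σ = 1 - |a|²`,
`|f(w)| ≤ C σ^(-(n+1+α)) ∫_{B(a,R)} |f| dv_α` for `w ∈ B(a,r)`, since `1 - |z|²` is comparable to
`σ` on `B(a,R)`. As `v_α(B(a,R)) ≤ C σ^(n+1+α)`, Hölder's inequality turns this into the bound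
`C σ^(-(n+1+α)/p)` for the point evaluations on `A^p(B(a,R), dv_α)`. Choosing `r < m < R`, the
first estimate dominates `‖S f‖` by a multiple of `∫_{B(a,m)} |f| dv_α`, an integral of point
evaluations of known norm, and such a domination is what makes an operator `1`-summing.
-/

section MeanValue

variable {E F : Type*} [NormedAddCommGroup E] [NormedSpace ℂ E]
  [NormedAddCommGroup F] [NormedSpace ℂ F] [CompleteSpace F]

lemma two_pi_mul_enorm_le_lintegral_circleMap {f : ℂ → F} {c : ℂ} {R : ℝ}
    (hf : DiffContOnCl ℂ f (ball c |R|)) :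
    ENNReal.ofReal (2 * Real.pi) * ‖f c‖ₑ ≤
      ∫⁻ θ in Set.Ioc 0 (2 * Real.pi), ‖f (circleMap c R θ)‖ₑ := by
  have hπ : 0 < 2 * Real.pi := Real.two_pi_pos
  have hmean : (2 * Real.pi) • f c = ∫ θ in Set.Ioc 0 (2 * Real.pi), f (circleMap c R θ) := by
    rw [← hf.circleAverage, Real.circleAverage_def, smul_inv_smul₀ hπ.ne',
      intervalIntegral.integral_of_le hπ.le]
  calc ENNReal.ofReal (2 * Real.pi) * ‖f c‖ₑ = ‖(2 * Real.pi) • f c‖ₑ := by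
        rw [enorm_smul, Real.enorm_of_nonneg hπ.le]
    _ ≤ ∫⁻ θ in Set.Ioc 0 (2 * Real.pi), ‖f (circleMap c R θ)‖ₑ :=
        hmean ▸ enorm_integral_le_lintegral_enorm _

lemma two_pi_mul_enorm_le_lintegral_rotation {f : E → F} {c u : E} {ε : ℝ}
    (hf : DifferentiableOn ℂ f (ball c ε)) (hu : u ∈ ball 0 ε) :
    ENNReal.ofReal (2 * Real.pi) * ‖f c‖ₑ ≤
      ∫⁻ θ in Set.Ioc 0 (2 * Real.pi), ‖f (c + circleMap 0 1 θ • u)‖ₑ := by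
  have hmaps : Set.MapsTo (fun z : ℂ => c + z • u) (closedBall 0 1) (ball c ε) := fun z hz => by
    rw [mem_closedBall_zero_iff] at hz
    rw [mem_ball_zero_iff] at hu
    rw [mem_ball_iff_norm, add_sub_cancel_left, norm_smul]
    exact (mul_le_of_le_one_left (norm_nonneg u) hz).trans_lt hu
  have hslice : DiffContOnCl ℂ (fun z : ℂ => f (c + z • u)) (ball 0 |1|) := by
    refine DifferentiableOn.diffContOnCl ?_
    rw [abs_one, closure_ball _ one_ne_zero]
    exact hf.comp (by fun_prop) hmaps
  simpa using two_pi_mul_enorm_le_lintegral_circleMap hslice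

variable [MeasurableSpace E] [BorelSpace E] [FiniteDimensional ℂ E] (μ : Measure E)
  [μ.IsAddHaarMeasure]

lemma measurePreserving_smul_of_norm_eq_one {c : ℂ} (hc : ‖c‖ = 1) :
    MeasurePreserving (fun u : E => c • u) μ μ := by
  have : FiniteDimensional ℝ E := FiniteDimensional.complexToReal E
  have hdet : LinearMap.det ((c • LinearMap.id : E →ₗ[ℂ] E).restrictScalars ℝ) = 1 := by
    rw [LinearMap.det_restrictScalars, LinearMap.det_smul, LinearMap.det_id, mul_one, map_pow,
      Algebra.norm_complex_apply, Complex.normSq_eq_norm_sq, hc, one_pow, one_pow]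
  refine ⟨measurable_const_smul c, ?_⟩
  have hmap := Measure.map_linearMap_addHaar_eq_smul_addHaar μ (hdet ▸ one_ne_zero)
  rwa [hdet, inv_one, abs_one, ENNReal.ofReal_one, one_smul] at hmap

lemma lintegral_lintegral_circleMap_smul {G : E → ℝ≥0∞} (hG : Measurable G) :
    ∫⁻ u, ∫⁻ θ in Set.Ioc 0 (2 * Real.pi), G (circleMap 0 1 θ • u) ∂volume ∂μ =
      ENNReal.ofReal (2 * Real.pi) * ∫⁻ u, G u ∂μ := by
  have : FiniteDimensional ℝ E := FiniteDimensional.complexToReal E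
  have hmeas : Measurable fun x : E × ℝ => G (circleMap 0 1 x.2 • x.1) :=
    hG.comp (by fun_prop : Continuous fun x : E × ℝ => circleMap 0 1 x.2 • x.1).measurable
  calc ∫⁻ u, ∫⁻ θ in Set.Ioc 0 (2 * Real.pi), G (circleMap 0 1 θ • u) ∂volume ∂μ
      = ∫⁻ θ in Set.Ioc 0 (2 * Real.pi), ∫⁻ u, G (circleMap 0 1 θ • u) ∂μ ∂volume :=
        lintegral_lintegral_swap hmeas.aemeasurable
    _ = ∫⁻ _ in Set.Ioc 0 (2 * Real.pi), ∫⁻ u, G u ∂μ ∂volume :=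
        lintegral_congr fun θ =>
          (measurePreserving_smul_of_norm_eq_one μ (by simp)).lintegral_comp hG
    _ = ENNReal.ofReal (2 * Real.pi) * ∫⁻ u, G u ∂μ := by
        rw [setLIntegral_const, Real.volume_Ioc, sub_zero, mul_comm]

/-- The ball is rotation invariant, so averaging over it may be done circle by circle. -/
lemma enorm_mul_measure_ball_le_lintegral {f : E → F} {c : E} {ε : ℝ}
    (hf : DifferentiableOn ℂ f (ball c ε)) :
    ‖f c‖ₑ * μ (ball c ε) ≤ ∫⁻ u in ball c ε, ‖f u‖ₑ ∂μ := by
  have : FiniteDimensional ℝ E := FiniteDimensional.complexToReal E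
  set G : E → ℝ≥0∞ := (ball 0 ε).indicator fun u => ‖f (c + u)‖ₑ with hG_def
  have hG : Measurable G := by
    classical
    have hcont : ContinuousOn (fun u => ‖f (c + u)‖ₑ) (ball 0 ε) :=
      (hf.continuousOn.comp (by fun_prop) fun u hu => by simpa using hu).enorm
    simpa [hG_def, Set.piecewise_eq_indicator] using
      hcont.measurable_piecewise (g := 0) continuousOn_const isOpen_ball.measurableSet
  have htranslate : ∫⁻ u in ball c ε, ‖f u‖ₑ ∂μ = ∫⁻ u, G u ∂μ := by
    rw [← lintegral_indicator isOpen_ball.measurableSet, ← lintegral_add_left_eq_self _ c]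
    simp [hG_def, Set.indicator]
  have hcircle : ∀ u ∈ ball (0 : E) ε, ENNReal.ofReal (2 * Real.pi) * ‖f c‖ₑ ≤
      ∫⁻ θ in Set.Ioc 0 (2 * Real.pi), G (circleMap 0 1 θ • u) := fun u hu => by
    refine (two_pi_mul_enorm_le_lintegral_rotation hf hu).trans_eq (lintegral_congr fun θ => ?_)
    rw [hG_def, Set.indicator_of_mem (by simpa [norm_smul] using hu)]
  have key : ENNReal.ofReal (2 * Real.pi) * (‖f c‖ₑ * μ (ball c ε)) ≤
      ENNReal.ofReal (2 * Real.pi) * ∫⁻ u in ball c ε, ‖f u‖ₑ ∂μ := by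
    calc ENNReal.ofReal (2 * Real.pi) * (‖f c‖ₑ * μ (ball c ε))
        = ∫⁻ _ in ball (0 : E) ε, ENNReal.ofReal (2 * Real.pi) * ‖f c‖ₑ ∂μ := by
          rw [setLIntegral_const, Measure.addHaar_ball_center, mul_assoc]
      _ ≤ ∫⁻ u in ball (0 : E) ε, ∫⁻ θ in Set.Ioc 0 (2 * Real.pi),
            G (circleMap 0 1 θ • u) ∂volume ∂μ :=
          setLIntegral_mono' isOpen_ball.measurableSet hcircle
      _ ≤ ∫⁻ u, ∫⁻ θ in Set.Ioc 0 (2 * Real.pi), G (circleMap 0 1 θ • u) ∂volume ∂μ :=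
          setLIntegral_le_lintegral _ _
      _ = ENNReal.ofReal (2 * Real.pi) * ∫⁻ u in ball c ε, ‖f u‖ₑ ∂μ := by
          rw [lintegral_lintegral_circleMap_smul μ hG, htranslate]
  exact (ENNReal.mul_le_mul_iff_right (by simp [Real.pi_pos]) ENNReal.ofReal_ne_top).1 key

end MeanValue

section Chart

variable {E : Type*} [NormedAddCommGroup E] {a u v : E} {r R : ℝ}

/-- The number `√(1 - |a|²)`. -/
def defect (a : E) : ℝ := √(1 - ‖a‖ ^ 2)

lemma one_sub_norm_sq_pos (ha : ‖a‖ < 1) : 0 < 1 - ‖a‖ ^ 2 :=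
  sub_pos.2 (pow_lt_one₀ (norm_nonneg a) ha two_ne_zero)

lemma defect_nonneg (a : E) : 0 ≤ defect a := Real.sqrt_nonneg _

lemma defect_pos (ha : ‖a‖ < 1) : 0 < defect a := Real.sqrt_pos.2 (one_sub_norm_sq_pos ha)

lemma defect_sq (ha : ‖a‖ ≤ 1) : defect a ^ 2 = 1 - ‖a‖ ^ 2 :=
  Real.sq_sqrt (sub_nonneg.2 (pow_le_one₀ (norm_nonneg a) ha))

lemma one_add_defect_ne_zero (a : E) : (1 + defect a : ℂ) ≠ 0 := by
  have := defect_nonneg a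
  exact_mod_cast (by positivity : 1 + defect a ≠ 0)

variable [InnerProductSpace ℂ E]

/-- The positive square root of `1 - a ⊗ a*`, that is `√(1 - |a|²) P + (1 - P)` with `P` the
orthogonal projection onto `ℂ a`. It is written as a rank one perturbation of the identity so that
`a = 0` is not exceptional. -/
def defectOp (a : E) : E →ₗ[ℂ] E :=
  LinearMap.transvection ((-(1 + defect a : ℂ)⁻¹) • (innerSL ℂ a).toLinearMap) a

/-- The affine parametrization of a neighbourhood of `a` in the unit ball under which the Bergman
balls centred at `a` become the sets `chartBall a R`. It is the composition of the Möbius involution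
`φ_a` with the projective map `u ↦ -u / (1 - ⟨u, a⟩)`. -/
def chart (a u : E) : E := a + (defect a : ℂ) • defectOp a u

/-- The ellipsoid that `chart a` maps onto the Bergman ball at `a` of pseudohyperbolic radius
`R`. -/
def chartBall (a : E) (R : ℝ) : Set E := {u | ‖u‖ < R * ‖1 - inner ℂ a u‖}

lemma inner_self_eq_one_sub_defect_sq (ha : ‖a‖ ≤ 1) : inner ℂ a a = 1 - (defect a : ℂ) ^ 2 := by
  rw [inner_self_eq_norm_sq_to_K, ← ofReal_pow, defect_sq ha]
  simp

lemma defectOp_apply (a u : E) :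
    defectOp a u = u - ((1 + defect a : ℂ)⁻¹ * inner ℂ a u) • a := by
  simp [defectOp, LinearMap.transvection.apply, sub_eq_add_neg]

lemma inner_defectOp (ha : ‖a‖ ≤ 1) (u : E) :
    inner ℂ a (defectOp a u) = defect a * inner ℂ a u := by
  have := one_add_defect_ne_zero a
  rw [defectOp_apply, inner_sub_right, inner_smul_right, inner_self_eq_one_sub_defect_sq ha]
  field_simp
  ring

lemma norm_defectOp_sq (ha : ‖a‖ ≤ 1) (u : E) :
    ‖defectOp a u‖ ^ 2 = ‖u‖ ^ 2 - ‖inner ℂ a u‖ ^ 2 := by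
  have hself : (inner ℂ (defectOp a u) (defectOp a u) : ℂ) =
      inner ℂ u u - inner ℂ a u * conj (inner ℂ a u) := by
    have := one_add_defect_ne_zero a
    nth_rw 1 [defectOp_apply]
    rw [inner_sub_left, inner_smul_left, inner_defectOp ha, defectOp_apply, inner_sub_right,
      inner_smul_right, ← inner_conj_symm u a]
    simp only [map_mul, map_inv₀, map_add, map_one, conj_ofReal]
    field_simp
    ring
  rw [inner_self_eq_norm_sq_to_K, inner_self_eq_norm_sq_to_K, mul_conj'] at hself
  rw [← ofReal_inj]
  simpa using hself

lemma one_sub_inner_chart (ha : ‖a‖ ≤ 1) (u : E) :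
    1 - inner ℂ a (chart a u) = (defect a : ℂ) ^ 2 * (1 - inner ℂ a u) := by
  rw [chart, inner_add_right, inner_smul_right, inner_defectOp ha,
    inner_self_eq_one_sub_defect_sq ha]
  ring

lemma one_sub_norm_chart_sq (ha : ‖a‖ ≤ 1) (u : E) :
    1 - ‖chart a u‖ ^ 2 = (1 - ‖a‖ ^ 2) * (‖1 - inner ℂ a u‖ ^ 2 - ‖u‖ ^ 2) := by
  have hchart : ‖chart a u‖ ^ 2 =
      ‖a‖ ^ 2 + 2 * (defect a ^ 2 * (inner ℂ a u).re) +
        defect a ^ 2 * (‖u‖ ^ 2 - ‖inner ℂ a u‖ ^ 2) := by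
    rw [chart, norm_add_sq (𝕜 := ℂ), inner_smul_right, inner_defectOp ha, ← mul_assoc, ← sq,
      ← ofReal_pow, RCLike.re_eq_complex_re, re_ofReal_mul, norm_smul, mul_pow,
      norm_defectOp_sq ha, norm_real, Real.norm_of_nonneg (defect_nonneg a)]
  have hsub : ‖1 - inner ℂ a u‖ ^ 2 = 1 - 2 * (inner ℂ a u).re + ‖inner ℂ a u‖ ^ 2 := by
    simpa using norm_sub_sq (𝕜 := ℂ) (1 : ℂ) (inner ℂ a u)
  rw [hchart, hsub, defect_sq ha]
  ring

lemma norm_inner_le_of_norm_le_one (ha : ‖a‖ ≤ 1) (u : E) : ‖inner ℂ a u‖ ≤ ‖u‖ :=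
  (norm_inner_le_norm a u).trans (mul_le_of_le_one_left (norm_nonneg u) ha)

lemma half_le_norm_one_sub_inner (ha : ‖a‖ ≤ 1) (hR : R ≤ 1) (hu : u ∈ chartBall a R) :
    1 / 2 ≤ ‖1 - inner ℂ a u‖ := by
  have hu : ‖u‖ < R * ‖1 - inner ℂ a u‖ := hu
  have hle := norm_inner_le_of_norm_le_one ha u
  have htri : 1 ≤ ‖1 - inner ℂ a u‖ + ‖inner ℂ a u‖ := by
    simpa using norm_add_le (1 - inner ℂ a u) (inner ℂ a u)
  nlinarith [norm_nonneg (1 - inner ℂ a u)]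

lemma norm_one_sub_inner_le (ha : ‖a‖ ≤ 1) (hR : R < 1) (hu : u ∈ chartBall a R) :
    ‖1 - inner ℂ a u‖ ≤ (1 - R)⁻¹ := by
  have hu : ‖u‖ < R * ‖1 - inner ℂ a u‖ := hu
  have hle := norm_inner_le_of_norm_le_one ha u
  have htri : ‖1 - inner ℂ a u‖ ≤ 1 + ‖inner ℂ a u‖ := by
    simpa using norm_sub_le 1 (inner ℂ a u)
  rw [← one_div, le_div_iff₀ (by linarith)]
  linarith

lemma norm_lt_of_mem_chartBall (ha : ‖a‖ ≤ 1) (hR : R < 1) (hu : u ∈ chartBall a R) :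
    ‖u‖ < (1 - R)⁻¹ := by
  have hu : ‖u‖ < R * ‖1 - inner ℂ a u‖ := hu
  have hle := norm_one_sub_inner_le ha hR hu
  nlinarith [norm_nonneg (1 - inner ℂ a u)]

lemma ball_subset_chartBall (ha : ‖a‖ ≤ 1) (hrR : r < R) (hR : R ≤ 1) (hu : u ∈ chartBall a r) :
    ball u ((R - r) / 4) ⊆ chartBall a R := fun v hv => by
  have hhalf := half_le_norm_one_sub_inner ha (hrR.le.trans hR) hu
  have hu : ‖u‖ < r * ‖1 - inner ℂ a u‖ := hu
  rw [mem_ball_iff_norm] at hv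
  have hnorm : ‖v‖ ≤ ‖u‖ + ‖v - u‖ := by simpa using norm_add_le u (v - u)
  have hinner : ‖1 - inner ℂ a u‖ ≤ ‖1 - inner ℂ a v‖ + ‖v - u‖ := by
    calc ‖1 - inner ℂ a u‖ = ‖(1 - inner ℂ a v) + inner ℂ a (v - u)‖ := by
          rw [inner_sub_right]; congr 1; ring
      _ ≤ ‖1 - inner ℂ a v‖ + ‖v - u‖ := (norm_add_le _ _).trans
          (add_le_add_right (norm_inner_le_of_norm_le_one ha _) _)
  change ‖v‖ < R * ‖1 - inner ℂ a v‖
  have hr : 0 < r := pos_of_mul_pos_left ((norm_nonneg u).trans_lt hu) (norm_nonneg _)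
  have hscale : R * (‖1 - inner ℂ a u‖ - ‖v - u‖) ≤ R * ‖1 - inner ℂ a v‖ :=
    mul_le_mul_of_nonneg_left (by linarith) (hr.trans hrR).le
  nlinarith [norm_nonneg (v - u)]

lemma isOpen_chartBall (a : E) (R : ℝ) : IsOpen (chartBall a R) :=
  isOpen_lt (by fun_prop) (by fun_prop)

lemma le_one_sub_norm_chart_sq (ha : ‖a‖ ≤ 1) (hR : R ≤ 1) (hu : u ∈ chartBall a R) :
    (1 - R ^ 2) / 4 * (1 - ‖a‖ ^ 2) ≤ 1 - ‖chart a u‖ ^ 2 := by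
  have hhalf := half_le_norm_one_sub_inner ha hR hu
  have hu : ‖u‖ < R * ‖1 - inner ℂ a u‖ := hu
  have hfactor : (1 - R ^ 2) / 4 ≤ ‖1 - inner ℂ a u‖ ^ 2 - ‖u‖ ^ 2 := by
    have hR0 : 0 < R := pos_of_mul_pos_left ((norm_nonneg u).trans_lt hu) (norm_nonneg _)
    have hR2 : R ^ 2 ≤ 1 := pow_le_one₀ hR0.le hR
    have hsq : ‖u‖ ^ 2 ≤ (R * ‖1 - inner ℂ a u‖) ^ 2 := by gcongr
    have hquarter : (1 / 2) ^ 2 ≤ ‖1 - inner ℂ a u‖ ^ 2 := by gcongr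
    nlinarith
  rw [one_sub_norm_chart_sq ha, mul_comm]
  have : 0 ≤ 1 - ‖a‖ ^ 2 := defect_sq ha ▸ sq_nonneg _
  gcongr

lemma one_sub_norm_chart_sq_le (ha : ‖a‖ ≤ 1) (hR : R < 1) (hu : u ∈ chartBall a R) :
    1 - ‖chart a u‖ ^ 2 ≤ ((1 - R) ^ 2)⁻¹ * (1 - ‖a‖ ^ 2) := by
  have hsq : ‖1 - inner ℂ a u‖ ^ 2 ≤ ((1 - R) ^ 2)⁻¹ := by
    rw [← inv_pow]
    gcongr
    exact norm_one_sub_inner_le ha hR hu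
  have : 0 ≤ 1 - ‖a‖ ^ 2 := defect_sq ha ▸ sq_nonneg _
  rw [one_sub_norm_chart_sq ha, mul_comm]
  gcongr
  linarith [sq_nonneg ‖u‖]

variable [FiniteDimensional ℂ E]

lemma det_defectOp (ha : ‖a‖ ≤ 1) : LinearMap.det (defectOp a) = defect a := by
  have := one_add_defect_ne_zero a
  rw [defectOp, LinearMap.transvection.det]
  simp only [LinearMap.smul_apply, ContinuousLinearMap.coe_coe, innerSL_apply_apply,
    inner_self_eq_one_sub_defect_sq ha, smul_eq_mul]
  field_simp
  ring

lemma det_restrictScalars_smul_defectOp (ha : ‖a‖ ≤ 1) :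
    LinearMap.det (((defect a : ℂ) • defectOp a).restrictScalars ℝ) =
      (1 - ‖a‖ ^ 2) ^ (Module.finrank ℂ E + 1) := by
  rw [LinearMap.det_restrictScalars, LinearMap.det_smul, det_defectOp ha, ← pow_succ, ← ofReal_pow,
    Algebra.norm_complex_apply, normSq_ofReal, ← defect_sq ha]
  ring

lemma det_restrictScalars_smul_defectOp_ne_zero (ha : ‖a‖ < 1) :
    LinearMap.det (((defect a : ℂ) • defectOp a).restrictScalars ℝ) ≠ 0 := by
  rw [det_restrictScalars_smul_defectOp ha.le]
  exact (pow_pos (one_sub_norm_sq_pos ha) _).ne'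

lemma differentiable_chart (a : E) : Differentiable ℂ (chart a) :=
  ((LinearMap.toContinuousLinearMap ((defect a : ℂ) • defectOp a)).differentiable).const_add a

/-- `chart a` as a homeomorphism. -/
def chartHomeo (ha : ‖a‖ < 1) : E ≃ₜ E :=
  have : FiniteDimensional ℝ E := FiniteDimensional.complexToReal E
  (LinearMap.equivOfDetNeZero _
    (det_restrictScalars_smul_defectOp_ne_zero ha)).toContinuousLinearEquiv.toHomeomorph.trans
      (Homeomorph.addLeft a)

lemma coe_chartHomeo (ha : ‖a‖ < 1) : ⇑(chartHomeo ha) = chart a := rfl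

variable [MeasurableSpace E] [BorelSpace E] (μ : Measure E) [μ.IsAddHaarMeasure]

lemma smul_map_chart_addHaar (ha : ‖a‖ < 1) :
    ENNReal.ofReal ((1 - ‖a‖ ^ 2) ^ (Module.finrank ℂ E + 1)) • Measure.map (chart a) μ = μ := by
  have : FiniteDimensional ℝ E := FiniteDimensional.complexToReal E
  have hcomp : chart a = (a + ·) ∘ ((defect a : ℂ) • defectOp a).restrictScalars ℝ := rfl
  have hpos : 0 < (1 - ‖a‖ ^ 2) ^ (Module.finrank ℂ E + 1) := pow_pos (one_sub_norm_sq_pos ha) _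
  rw [hcomp, ← Measure.map_map (measurable_const_add a)
    (LinearMap.continuous_of_finiteDimensional _).measurable,
    Measure.map_linearMap_addHaar_eq_smul_addHaar μ (det_restrictScalars_smul_defectOp_ne_zero ha),
    Measure.map_smul, map_add_left_eq_self, det_restrictScalars_smul_defectOp ha.le,
    abs_of_pos (inv_pos.2 hpos), smul_smul, ← ENNReal.ofReal_mul hpos.le, mul_inv_cancel₀ hpos.ne',
    ENNReal.ofReal_one, one_smul]

end Chart

section BergmanBall

variable {n : ℕ} {a w : En n} {r R : ℝ}

lemma herm_eq_inner (z w : En n) : herm z w = inner ℂ w z := by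
  simp [herm, PiLp.inner_apply]

lemma norm_mobius_chart (ha : ‖a‖ < 1) (u : En n) :
    ‖mobius a (chart a u)‖ = ‖u‖ / ‖1 - inner ℂ a u‖ := by
  by_cases ha0 : a = 0
  · simp [mobius, ha0, chart, defect, defectOp_apply]
  have hself : (inner ℂ a a : ℂ) ≠ 0 := inner_self_ne_zero.2 ha0
  have hdefect : (defect a : ℂ) ≠ 0 := ofReal_ne_zero.2 (defect_pos ha).ne'
  have hadd := one_add_defect_ne_zero a
  have hparallel : a - (inner ℂ a (chart a u) / inner ℂ a a) • a -
      (defect a : ℂ) • (chart a u - (inner ℂ a (chart a u) / inner ℂ a a) • a) =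
        -(defect a : ℂ) ^ 2 • u := by
    have hinner : inner ℂ a (chart a u) = inner ℂ a a + (defect a : ℂ) ^ 2 * inner ℂ a u := by
      rw [chart, inner_add_right, inner_smul_right, inner_defectOp ha.le]
      ring
    rw [hinner, chart, defectOp_apply]
    match_scalars
    · field_simp
      rw [inner_self_eq_one_sub_defect_sq ha.le]
      ring
    · ring
  rw [mobius, if_neg ha0]
  simp only [herm_eq_inner]
  rw [one_sub_inner_chart ha.le]
  change ‖_ • (_ - (defect a : ℂ) • _)‖ = _
  have hsq : ‖(defect a : ℂ) ^ 2‖ ≠ 0 := norm_ne_zero_iff.2 (pow_ne_zero 2 hdefect)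
  rw [hparallel, norm_smul, norm_inv, norm_mul, norm_smul, norm_neg]
  field_simp

lemma artanh_lt_iff_lt_tanh {x : ℝ} (hx : x ∈ Set.Ioo (-1) 1) :
    Real.artanh x < r ↔ x < Real.tanh r := by
  rw [← Real.artanh_lt_artanh_iff hx ⟨Real.neg_one_lt_tanh r, Real.tanh_lt_one r⟩, Real.artanh_tanh]

lemma tanh_lt_tanh (h : r < R) : Real.tanh r < Real.tanh R := by
  rwa [← artanh_lt_iff_lt_tanh ⟨Real.neg_one_lt_tanh r, Real.tanh_lt_one r⟩, Real.artanh_tanh]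

lemma bergmanDist_eq_artanh {z : En n} (h : ‖mobius z w‖ ≤ 1) :
    bergmanDist z w = Real.artanh ‖mobius z w‖ := by
  rw [bergmanDist, Real.artanh_eq_half_log ⟨by linarith [norm_nonneg (mobius z w)], h⟩]

lemma chart_mem_unitBall_iff (ha : ‖a‖ < 1) {u : En n} :
    chart a u ∈ unitBall n ↔ ‖u‖ < ‖1 - inner ℂ a u‖ := by
  have hpos := one_sub_norm_sq_pos ha
  rw [unitBall, mem_ball_zero_iff, ← sq_lt_sq₀ (norm_nonneg _) (norm_nonneg _),
    ← sq_lt_one_iff₀ (norm_nonneg _), ← sub_pos, one_sub_norm_chart_sq ha.le,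
    mul_pos_iff_of_pos_left hpos, sub_pos]

lemma chart_mem_bergmanBall_iff (ha : ‖a‖ < 1) {u : En n} :
    chart a u ∈ bergmanBall a r ↔ u ∈ chartBall a (Real.tanh r) := by
  have hdist (hu : ‖u‖ < ‖1 - inner ℂ a u‖) :
      bergmanDist a (chart a u) < r ↔ ‖u‖ < Real.tanh r * ‖1 - inner ℂ a u‖ := by
    have hD := (norm_nonneg u).trans_lt hu
    have hlt : ‖mobius a (chart a u)‖ < 1 := by rwa [norm_mobius_chart ha, div_lt_one hD]
    rw [bergmanDist_eq_artanh hlt.le,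
      artanh_lt_iff_lt_tanh ⟨by linarith [norm_nonneg (mobius a (chart a u))], hlt⟩,
      norm_mobius_chart ha, div_lt_iff₀ hD]
  have hunit (hu : u ∈ chartBall a (Real.tanh r)) : ‖u‖ < ‖1 - inner ℂ a u‖ :=
    lt_of_lt_of_le hu (mul_le_of_le_one_left (norm_nonneg _) (Real.tanh_lt_one r).le)
  rw [bergmanBall, Set.mem_ofPred_eq, chart_mem_unitBall_iff ha]
  exact ⟨fun h => (hdist h.1).1 h.2, fun hu => ⟨hunit hu, (hdist (hunit hu)).2 hu⟩⟩

lemma chart_preimage_bergmanBall (ha : ‖a‖ < 1) (r : ℝ) :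
    chart a ⁻¹' bergmanBall a r = chartBall a (Real.tanh r) :=
  Set.ext fun _ => chart_mem_bergmanBall_iff ha

lemma isOpen_bergmanBall (ha : ‖a‖ < 1) (r : ℝ) : IsOpen (bergmanBall a r) := by
  rw [← (chartHomeo ha).isOpen_preimage, coe_chartHomeo, chart_preimage_bergmanBall ha]
  exact isOpen_chartBall a _

lemma bergmanBall_subset_unitBall : bergmanBall a r ⊆ unitBall n := fun _ h => h.1

lemma bergmanBall_subset_bergmanBall (h : r ≤ R) : bergmanBall a r ⊆ bergmanBall a R :=
  fun _ hw => ⟨hw.1, hw.2.trans_le h⟩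

end BergmanBall

section Volume

variable {n : ℕ} {a w : En n} {r R : ℝ}

lemma measurableEmbedding_chart (ha : ‖a‖ < 1) : MeasurableEmbedding (chart a) :=
  (chartHomeo ha).measurableEmbedding

lemma restrict_bergmanBall_eq_smul_map_chart (ha : ‖a‖ < 1) (r : ℝ) :
    volume.restrict (bergmanBall a r) =
      ENNReal.ofReal ((1 - ‖a‖ ^ 2) ^ (n + 1)) •
        Measure.map (chart a) (volume.restrict (chartBall a (Real.tanh r))) := by
  conv_lhs => rw [← smul_map_chart_addHaar volume ha]
  rw [Measure.restrict_smul, finrank_euclideanSpace_fin,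
    (measurableEmbedding_chart ha).restrict_map, chart_preimage_bergmanBall ha]

lemma volume_bergmanBall_le (ha : ‖a‖ < 1) (r : ℝ) :
    volume (bergmanBall a r) ≤ ENNReal.ofReal ((1 - ‖a‖ ^ 2) ^ (n + 1)) *
      volume (ball (0 : En n) (1 - Real.tanh r)⁻¹) := by
  have hsubset : chartBall a (Real.tanh r) ⊆ ball 0 (1 - Real.tanh r)⁻¹ := fun u hu =>
    mem_ball_zero_iff.2 (norm_lt_of_mem_chartBall ha.le (Real.tanh_lt_one r) hu)
  rw [← Measure.restrict_apply_univ, restrict_bergmanBall_eq_smul_map_chart ha, Measure.smul_apply,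
    Measure.map_apply (measurableEmbedding_chart ha).measurable .univ, Set.preimage_univ,
    Measure.restrict_apply_univ, smul_eq_mul]
  gcongr

lemma enorm_mul_le_lintegral_bergmanBall (ha : ‖a‖ < 1) (hrR : r < R) (hw : w ∈ bergmanBall a r)
    {g : En n → ℂ} (hg : DifferentiableOn ℂ g (bergmanBall a R)) :
    ENNReal.ofReal ((1 - ‖a‖ ^ 2) ^ (n + 1)) *
        (volume (ball (0 : En n) ((Real.tanh R - Real.tanh r) / 4)) * ‖g w‖ₑ) ≤
      ∫⁻ z in bergmanBall a R, ‖g z‖ₑ := by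
  obtain ⟨u, rfl⟩ : ∃ u, chart a u = w := (chartHomeo ha).surjective w
  set ε := (Real.tanh R - Real.tanh r) / 4
  have hball : ball u ε ⊆ chartBall a (Real.tanh R) :=
    ball_subset_chartBall ha.le (tanh_lt_tanh hrR) (Real.tanh_lt_one R).le
      ((chart_mem_bergmanBall_iff ha).1 hw)
  have hgchart : DifferentiableOn ℂ (g ∘ chart a) (ball u ε) :=
    hg.comp (differentiable_chart a).differentiableOn
      fun v hv => (chart_mem_bergmanBall_iff ha).2 (hball hv)
  rw [restrict_bergmanBall_eq_smul_map_chart ha, lintegral_smul_measure,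
    (measurableEmbedding_chart ha).lintegral_map, smul_eq_mul]
  gcongr
  calc volume (ball (0 : En n) ε) * ‖g (chart a u)‖ₑ
      = ‖(g ∘ chart a) u‖ₑ * volume (ball u ε) := by
        rw [Measure.addHaar_ball_center volume u, mul_comm, Function.comp_apply]
    _ ≤ ∫⁻ v in ball u ε, ‖(g ∘ chart a) v‖ₑ := enorm_mul_measure_ball_le_lintegral volume hgchart
    _ ≤ ∫⁻ v in chartBall a (Real.tanh R), ‖g (chart a v)‖ₑ := lintegral_mono_set hball

end Volume

section Weight

lemma rpow_le_max_mul_rpow {l L x y : ℝ} (hl : 0 < l) (hy : 0 < y) (hlx : l * y ≤ x)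
    (hxL : x ≤ L * y) (α : ℝ) : x ^ α ≤ max (l ^ α) (L ^ α) * y ^ α := by
  have hly : 0 < l * y := mul_pos hl hy
  have hL : 0 < L := pos_of_mul_pos_left (hly.trans_le (hlx.trans hxL)) hy.le
  rw [max_mul_of_nonneg _ _ (by positivity), ← Real.mul_rpow hl.le hy.le,
    ← Real.mul_rpow hL.le hy.le]
  rcases le_total 0 α with hα | hα
  · exact (Real.rpow_le_rpow (hly.le.trans hlx) hxL hα).trans (le_max_right _ _)
  · exact (Real.rpow_le_rpow_of_nonpos hly hlx hα).trans (le_max_left _ _)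

lemma min_mul_rpow_le_rpow {l L x y : ℝ} (hl : 0 < l) (hy : 0 < y) (hlx : l * y ≤ x)
    (hxL : x ≤ L * y) (α : ℝ) : min (l ^ α) (L ^ α) * y ^ α ≤ x ^ α := by
  have hly : 0 < l * y := mul_pos hl hy
  have hL : 0 < L := pos_of_mul_pos_left (hly.trans_le (hlx.trans hxL)) hy.le
  rw [min_mul_of_nonneg _ _ (by positivity), ← Real.mul_rpow hl.le hy.le,
    ← Real.mul_rpow hL.le hy.le]
  rcases le_total 0 α with hα | hα
  · exact (min_le_left _ _).trans (Real.rpow_le_rpow hly.le hlx hα)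
  · exact (min_le_right _ _).trans (Real.rpow_le_rpow_of_nonpos (hly.trans_le hlx) hxL hα)

lemma exists_one_sub_norm_sq_rpow_comparable (n : ℕ) (α r : ℝ) :
    ∃ c > 0, ∃ C > 0, ∀ a : En n, ‖a‖ < 1 → ∀ w ∈ bergmanBall a r,
      c * (1 - ‖a‖ ^ 2) ^ α ≤ (1 - ‖w‖ ^ 2) ^ α ∧
        (1 - ‖w‖ ^ 2) ^ α ≤ C * (1 - ‖a‖ ^ 2) ^ α := by
  set l := (1 - Real.tanh r ^ 2) / 4
  set L := ((1 - Real.tanh r) ^ 2)⁻¹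
  have hl : 0 < l := by
    have := Real.tanh_sq_lt_one r
    simp only [l]
    linarith
  have hL : 0 < L := inv_pos.2 (pow_pos (sub_pos.2 (Real.tanh_lt_one r)) 2)
  refine ⟨min (l ^ α) (L ^ α), by positivity, max (l ^ α) (L ^ α), by positivity,
    fun a ha w hw => ?_⟩
  obtain ⟨u, rfl⟩ : ∃ u, chart a u = w := (chartHomeo ha).surjective w
  have hu := (chart_mem_bergmanBall_iff ha).1 hw
  have hlower := le_one_sub_norm_chart_sq ha.le (Real.tanh_lt_one r).le hu
  have hupper := one_sub_norm_chart_sq_le ha.le (Real.tanh_lt_one r) hu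
  exact ⟨min_mul_rpow_le_rpow hl (one_sub_norm_sq_pos ha) hlower hupper α,
    rpow_le_max_mul_rpow hl (one_sub_norm_sq_pos ha) hlower hupper α⟩

lemma measureReal_ball_pos {n : ℕ} (x : En n) {ε : ℝ} (hε : 0 < ε) : 0 < volume.real (ball x ε) :=
  ENNReal.toReal_pos (measure_ball_pos volume x hε).ne' measure_ball_ne_top

lemma volConst_pos (n : ℕ) {α : ℝ} (hα : -1 < α) : 0 < volConst n α :=
  div_pos (Real.Gamma_pos_of_pos (by linarith [n.cast_nonneg (α := ℝ)]))
    (mul_pos (by positivity) (Real.Gamma_pos_of_pos (by linarith)))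

lemma wMeas_restrict_bergmanBall {n : ℕ} {a : En n} (ha : ‖a‖ < 1) (α r : ℝ) :
    (wMeas n α).restrict (bergmanBall a r) =
      (volume.restrict (bergmanBall a r)).withDensity fun z =>
        ENNReal.ofReal ((volume.real (ball (0 : En n) 1))⁻¹ * volConst n α *
          (1 - ‖z‖ ^ 2) ^ α) := by
  have hV : (volume (ball (0 : En n) 1))⁻¹ =
      ENNReal.ofReal (volume.real (ball (0 : En n) 1))⁻¹ := by
    rw [ENNReal.ofReal_inv_of_pos (measureReal_ball_pos 0 one_pos), ofReal_measureReal]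
  have hmeas : Measurable fun z : En n => ENNReal.ofReal (volConst n α * (1 - ‖z‖ ^ 2) ^ α) := by
    fun_prop
  rw [wMeas, vMeas, restrict_withDensity (isOpen_bergmanBall ha r).measurableSet,
    Measure.restrict_smul,
    Measure.restrict_restrict_of_subset (t := ball 0 1) bergmanBall_subset_unitBall,
    withDensity_smul_measure, ← withDensity_smul _ hmeas, hV]
  congr 1 with z
  rw [Pi.smul_apply, smul_eq_mul, ← ENNReal.ofReal_mul (by positivity), mul_assoc]

lemma exists_wMeas_restrict_bergmanBall_comparable (n : ℕ) {α : ℝ} (hα : -1 < α) (r : ℝ) :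
    ∃ c > 0, ∃ C > 0, ∀ a : En n, ‖a‖ < 1 →
      ENNReal.ofReal (c * (1 - ‖a‖ ^ 2) ^ α) • volume.restrict (bergmanBall a r) ≤
          (wMeas n α).restrict (bergmanBall a r) ∧
        (wMeas n α).restrict (bergmanBall a r) ≤
          ENNReal.ofReal (C * (1 - ‖a‖ ^ 2) ^ α) • volume.restrict (bergmanBall a r) := by
  obtain ⟨c, hc, C, hC, hcomparable⟩ := exists_one_sub_norm_sq_rpow_comparable n α r
  set κ := (volume.real (ball (0 : En n) 1))⁻¹ * volConst n α with hκ_def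
  have hκ : 0 < κ :=
    mul_pos (inv_pos.2 (measureReal_ball_pos 0 one_pos)) (volConst_pos n hα)
  refine ⟨κ * c, by positivity, κ * C, by positivity, fun a ha => ?_⟩
  have hae := ae_restrict_mem (μ := volume) (isOpen_bergmanBall ha r).measurableSet
  rw [wMeas_restrict_bergmanBall ha, ← hκ_def, ← withDensity_const, ← withDensity_const]
  constructor
  · refine withDensity_mono (hae.mono fun z hz => ENNReal.ofReal_le_ofReal ?_)
    rw [mul_assoc κ]
    exact mul_le_mul_of_nonneg_left (hcomparable a ha z hz).1 hκ.le
  · refine withDensity_mono (hae.mono fun z hz => ENNReal.ofReal_le_ofReal ?_)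
    rw [mul_assoc κ]
    exact mul_le_mul_of_nonneg_left (hcomparable a ha z hz).2 hκ.le

lemma exists_wMeas_bergmanBall_le (n : ℕ) {α : ℝ} (hα : -1 < α) (r : ℝ) :
    ∃ C > 0, ∀ a : En n, ‖a‖ < 1 →
      wMeas n α (bergmanBall a r) ≤ ENNReal.ofReal (C * (1 - ‖a‖ ^ 2) ^ (n + 1 + α)) := by
  obtain ⟨_, _, C, hC, hcomparable⟩ := exists_wMeas_restrict_bergmanBall_comparable n hα r
  set V := volume.real (ball (0 : En n) (1 - Real.tanh r)⁻¹)
  have hV : 0 < V := measureReal_ball_pos 0 (inv_pos.2 (sub_pos.2 (Real.tanh_lt_one r)))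
  refine ⟨C * V, by positivity, fun a ha => ?_⟩
  have hσ := one_sub_norm_sq_pos ha
  calc wMeas n α (bergmanBall a r)
      ≤ ENNReal.ofReal (C * (1 - ‖a‖ ^ 2) ^ α) * volume (bergmanBall a r) := by
        simpa using (hcomparable a ha).2 Set.univ
    _ ≤ ENNReal.ofReal (C * (1 - ‖a‖ ^ 2) ^ α) *
          (ENNReal.ofReal ((1 - ‖a‖ ^ 2) ^ (n + 1)) * ENNReal.ofReal V) := by
        rw [ofReal_measureReal]
        gcongr
        exact volume_bergmanBall_le ha r
    _ = ENNReal.ofReal (C * V * (1 - ‖a‖ ^ 2) ^ (n + 1 + α)) := by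
        rw [← ENNReal.ofReal_mul (by positivity), ← ENNReal.ofReal_mul (by positivity),
          Real.rpow_add hσ, ← Nat.cast_add_one, Real.rpow_natCast]
        ring_nf

end Weight

section PointEvaluation

/-- Point evaluations at the points of `A` are bounded by `M` on the holomorphic functions on `Ω`
with the `L^P(ν)` norm. -/
def HasEvalBound {n : ℕ} (P : ℝ≥0∞) (Ω : Set (En n)) (ν : Measure (En n)) (A : Set (En n))
    (M : ℝ≥0) : Prop :=
  ∀ g : En n → ℂ, DifferentiableOn ℂ g Ω → ∀ w ∈ A, ‖g w‖ₑ ≤ M * eLpNorm g P ν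

variable {n : ℕ} {P : ℝ≥0∞} {Ω A B : Set (En n)} {ν : Measure (En n)} {M : ℝ≥0}

lemma HasEvalBound.mono (h : HasEvalBound P Ω ν A M) (hBA : B ⊆ A) : HasEvalBound P Ω ν B M :=
  fun g hg w hw => h g hg w (hBA hw)

lemma HasEvalBound.eqOn (h : HasEvalBound P Ω ν A M) {g g' : En n → ℂ}
    (hg : DifferentiableOn ℂ g Ω) (hg' : DifferentiableOn ℂ g' Ω) (hgg' : g =ᵐ[ν] g') :
    Set.EqOn g g' A := fun w hw => by
  have hzero : g - g' =ᵐ[ν] 0 := hgg'.mono fun z hz => sub_eq_zero.2 hz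
  have hbound := h (g - g') (hg.sub hg') w hw
  rw [eLpNorm_congr_ae hzero, eLpNorm_zero, mul_zero] at hbound
  simpa [sub_eq_zero] using hbound

variable [Fact (1 ≤ P)]

/-- A representative of `F` that is holomorphic on `Ω`. -/
def holoRep (F : holoSubmodule n P Ω ν) : En n → ℂ := F.2.choose

lemma differentiableOn_holoRep (F : holoSubmodule n P Ω ν) : DifferentiableOn ℂ (holoRep F) Ω :=
  F.2.choose_spec.1

lemma coeFn_ae_eq_holoRep (F : holoSubmodule n P Ω ν) : F.1 =ᵐ[ν] holoRep F :=
  F.2.choose_spec.2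

lemma eLpNorm_holoRep (F : holoSubmodule n P Ω ν) : eLpNorm (holoRep F) P ν = ‖F‖ₑ := by
  rw [← eLpNorm_congr_ae (coeFn_ae_eq_holoRep F), ← Lp.enorm_def]
  rfl

namespace HasEvalBound

lemma enorm_holoRep_le (h : HasEvalBound P Ω ν A M) (F : holoSubmodule n P Ω ν) {w : En n}
    (hw : w ∈ A) : ‖holoRep F w‖ₑ ≤ M * ‖F‖ₑ :=
  eLpNorm_holoRep F ▸ h _ (differentiableOn_holoRep F) w hw

lemma norm_holoRep_le (h : HasEvalBound P Ω ν A M) (F : holoSubmodule n P Ω ν) {w : En n}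
    (hw : w ∈ A) : ‖holoRep F w‖ ≤ M * ‖F‖ := by
  have hle := h.enorm_holoRep_le F hw
  simp only [enorm_eq_nnnorm] at hle
  exact_mod_cast hle

lemma holoRep_add (h : HasEvalBound P Ω ν A M) (F G : holoSubmodule n P Ω ν) :
    Set.EqOn (holoRep (F + G)) (holoRep F + holoRep G) A :=
  h.eqOn (differentiableOn_holoRep _)
    ((differentiableOn_holoRep F).add (differentiableOn_holoRep G))
    ((coeFn_ae_eq_holoRep _).symm.trans ((Lp.coeFn_add F.1 G.1).trans
      ((coeFn_ae_eq_holoRep F).add (coeFn_ae_eq_holoRep G))))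

lemma holoRep_smul (h : HasEvalBound P Ω ν A M) (c : ℂ) (F : holoSubmodule n P Ω ν) :
    Set.EqOn (holoRep (c • F)) (c • holoRep F) A :=
  h.eqOn (differentiableOn_holoRep _) ((differentiableOn_holoRep F).const_smul c)
    ((coeFn_ae_eq_holoRep _).symm.trans ((Lp.coeFn_smul c F.1).trans
      ((coeFn_ae_eq_holoRep F).const_smul c)))

/-- Evaluation at `w` as a bounded functional on the holomorphic functions in `L^P(ν)`. -/
def holoEval (h : HasEvalBound P Ω ν A M) (w : A) : holoSubmodule n P Ω ν →L[ℂ] ℂ :=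
  LinearMap.mkContinuous
    { toFun := fun F => holoRep F w
      map_add' := fun F G => h.holoRep_add F G w.2
      map_smul' := fun c F => h.holoRep_smul c F w.2 }
    M fun F => h.norm_holoRep_le F w.2

lemma holoEval_apply (h : HasEvalBound P Ω ν A M) (w : A) (F : holoSubmodule n P Ω ν) :
    h.holoEval w F = holoRep F w := rfl

lemma enorm_holoEval_le (h : HasEvalBound P Ω ν A M) (w : A) : ‖h.holoEval w‖ₑ ≤ M := by
  rw [enorm_eq_nnnorm, ENNReal.coe_le_coe]
  exact LinearMap.mkContinuous_norm_le _ M.2 _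

variable {μ : Measure (En n)}

lemma memLp_holoRep (h : HasEvalBound P Ω ν B M) (hB : MeasurableSet B) (hBΩ : B ⊆ Ω)
    (hμB : μ B < ⊤) (F : holoSubmodule n P Ω ν) (Q : ℝ≥0∞) :
    MemLp (holoRep F) Q (μ.restrict B) := by
  have : IsFiniteMeasure (μ.restrict B) := ⟨by rwa [Measure.restrict_apply_univ]⟩
  exact .of_bound
    (((differentiableOn_holoRep F).continuousOn.mono hBΩ).aestronglyMeasurable hB) (M * ‖F‖)
    ((ae_restrict_mem hB).mono fun w hw => h.norm_holoRep_le F hw)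

variable {Q : ℝ≥0∞}

/-- The restriction `f ↦ f|_B` from the holomorphic functions in `L^P(ν)` to `L^Q(B, μ)`. -/
def restrictionOp (h : HasEvalBound P Ω ν B M) (hB : MeasurableSet B) (hBΩ : B ⊆ Ω)
    (hμB : μ B < ⊤) : holoSubmodule n P Ω ν →ₗ[ℂ] Lp ℂ Q (μ.restrict B) where
  toFun F := (h.memLp_holoRep hB hBΩ hμB F Q).toLp (holoRep F)
  map_add' F G := by
    rw [← MemLp.toLp_add]
    exact MemLp.toLp_congr _ _ ((ae_restrict_mem hB).mono (h.holoRep_add F G))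
  map_smul' c F := by
    rw [RingHom.id_apply, ← MemLp.toLp_const_smul]
    exact MemLp.toLp_congr _ _ ((ae_restrict_mem hB).mono (h.holoRep_smul c F))

lemma coeFn_restrictionOp (h : HasEvalBound P Ω ν B M) (hB : MeasurableSet B) (hBΩ : B ⊆ Ω)
    (hμB : μ B < ⊤) {F : holoSubmodule n P Ω ν} {g : En n → ℂ} (hg : DifferentiableOn ℂ g Ω)
    (hFg : F.1 =ᵐ[ν] g) :
    (h.restrictionOp hB hBΩ hμB F : Lp ℂ Q (μ.restrict B)) =ᵐ[μ.restrict B] g :=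
  (h.memLp_holoRep hB hBΩ hμB F Q).coeFn_toLp.trans ((ae_restrict_mem hB).mono
    (h.eqOn (differentiableOn_holoRep F) hg ((coeFn_ae_eq_holoRep F).symm.trans hFg)))

lemma enorm_restrictionOp_le (h : HasEvalBound P Ω ν B M) (hB : MeasurableSet B) (hBΩ : B ⊆ Ω)
    (hμB : μ B < ⊤) {F : holoSubmodule n P Ω ν} {b : ℝ≥0∞} (hb : ∀ w ∈ B, ‖holoRep F w‖ₑ ≤ b) :
    ‖(h.restrictionOp hB hBΩ hμB F : Lp ℂ Q (μ.restrict B))‖ₑ ≤ b * μ B ^ (1 / Q.toReal) := by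
  refine (Lp.enorm_toLp (h.memLp_holoRep hB hBΩ hμB F Q)).trans_le ?_
  simpa using eLpNorm_le_of_ae_enorm_bound (p := Q) ((ae_restrict_mem (μ := μ) hB).mono hb)

end HasEvalBound

end PointEvaluation

section Summing

variable {X : Type*} [NormedAddCommGroup X] [NormedSpace ℂ X] {m : ℕ} {s : ℝ}

/-- The weak `ℓ^s` norm of a finite family, the right-hand side of the inequality defining
`s`-summing operators. -/
def weakNorm (s : ℝ) (x : Fin m → X) : ℝ :=
  ⨆ φ : {φ : X →L[ℂ] ℂ // ‖φ‖ ≤ 1}, (∑ k, ‖φ.1 (x k)‖ ^ s) ^ (1 / s)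

lemma weakNorm_nonneg (s : ℝ) (x : Fin m → X) : 0 ≤ weakNorm s x :=
  Real.iSup_nonneg fun _ => by positivity

lemma le_weakNorm (hs : 0 ≤ s) (x : Fin m → X) {φ : X →L[ℂ] ℂ} (hφ : ‖φ‖ ≤ 1) :
    (∑ k, ‖φ (x k)‖ ^ s) ^ (1 / s) ≤ weakNorm s x := by
  have hbdd : BddAbove (Set.range fun φ : {φ : X →L[ℂ] ℂ // ‖φ‖ ≤ 1} =>
      (∑ k, ‖φ.1 (x k)‖ ^ s) ^ (1 / s)) := by
    refine ⟨(∑ k, ‖x k‖ ^ s) ^ (1 / s), Set.forall_mem_range.2 fun ψ => ?_⟩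
    gcongr with k
    exact (ψ.1.le_of_opNorm_le ψ.2 (x k)).trans_eq (one_mul _)
  exact le_ciSup hbdd ⟨φ, hφ⟩

lemma sum_norm_rpow_le (hs : 0 < s) (x : Fin m → X) (φ : X →L[ℂ] ℂ) :
    ∑ k, ‖φ (x k)‖ ^ s ≤ (‖φ‖ * weakNorm s x) ^ s := by
  rcases eq_or_ne φ 0 with rfl | hφ
  · simp [Real.zero_rpow hs.ne']
  have hnorm : 0 < ‖φ‖ := norm_pos_iff.2 hφ
  have hunit : ‖(‖φ‖⁻¹ : ℂ) • φ‖ ≤ 1 := by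
    rw [norm_smul, norm_inv, norm_real, norm_norm, inv_mul_cancel₀ hnorm.ne']
  have hle := le_weakNorm hs.le x hunit
  rw [one_div, Real.rpow_inv_le_iff_of_pos (by positivity) (weakNorm_nonneg s x) hs] at hle
  calc ∑ k, ‖φ (x k)‖ ^ s = ‖φ‖ ^ s * ∑ k, ‖((‖φ‖⁻¹ : ℂ) • φ) (x k)‖ ^ s := by
        rw [Finset.mul_sum]
        refine Finset.sum_congr rfl fun k _ => ?_
        rw [← Real.mul_rpow hnorm.le (norm_nonneg _), smul_apply, norm_smul,
          norm_inv, norm_real, norm_norm, mul_inv_cancel_left₀ hnorm.ne']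
    _ ≤ (‖φ‖ * weakNorm s x) ^ s := by
        rw [Real.mul_rpow hnorm.le (weakNorm_nonneg s x)]
        gcongr

lemma sum_enorm_rpow_le (hs : 0 < s) (x : Fin m → X) (φ : X →L[ℂ] ℂ) :
    ∑ k, ‖φ (x k)‖ₑ ^ s ≤ (‖φ‖ₑ * ENNReal.ofReal (weakNorm s x)) ^ s := by
  have hle := ENNReal.ofReal_le_ofReal (sum_norm_rpow_le hs x φ)
  rw [ENNReal.ofReal_sum_of_nonneg fun _ _ => by positivity] at hle
  simpa only [← ENNReal.ofReal_rpow_of_nonneg (norm_nonneg _) hs.le,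
    ← ENNReal.ofReal_rpow_of_nonneg (mul_nonneg (norm_nonneg φ) (weakNorm_nonneg s x)) hs.le,
    ENNReal.ofReal_mul (norm_nonneg φ), ofReal_norm] using hle

/-- The easy half of Pietsch's domination theorem. -/
lemma summingBoundWith_of_enorm_rpow_le_lintegral {Y W : Type*} [NormedAddCommGroup Y]
    [MeasurableSpace W] {σ : Measure W} {T : X → Y} {e : W → X →L[ℂ] ℂ} {M : ℝ≥0∞} {K : ℝ}
    (hs : 0 < s) (he : ∀ w, ‖e w‖ₑ ≤ M) (he_meas : ∀ x, AEMeasurable (fun w => e w x) σ)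
    (hT : ∀ x, ‖T x‖ₑ ^ s ≤ ∫⁻ w, ‖e w x‖ₑ ^ s ∂σ) (hK : 0 ≤ K)
    (hMK : M ^ s * σ Set.univ ≤ ENNReal.ofReal K ^ s) : SummingBoundWith s s T K := by
  intro m x
  change _ ≤ K * weakNorm s x
  have hweak := weakNorm_nonneg s x
  have hsum : ∑ k, ‖T (x k)‖ₑ ^ s ≤ ENNReal.ofReal (K * weakNorm s x) ^ s := by
    calc ∑ k, ‖T (x k)‖ₑ ^ s ≤ ∑ k, ∫⁻ w, ‖e w (x k)‖ₑ ^ s ∂σ := Finset.sum_le_sum fun k _ => hT _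
      _ = ∫⁻ w, ∑ k, ‖e w (x k)‖ₑ ^ s ∂σ :=
          (lintegral_finsetSum' _ fun k _ => (he_meas (x k)).enorm.pow_const s).symm
      _ ≤ ∫⁻ _, (M * ENNReal.ofReal (weakNorm s x)) ^ s ∂σ :=
          lintegral_mono fun w => (sum_enorm_rpow_le hs x (e w)).trans (by gcongr; exact he w)
      _ = M ^ s * σ Set.univ * ENNReal.ofReal (weakNorm s x) ^ s := by
          rw [lintegral_const, ENNReal.mul_rpow_of_nonneg _ _ hs.le, mul_right_comm]
      _ ≤ ENNReal.ofReal (K * weakNorm s x) ^ s := by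
          rw [ENNReal.ofReal_mul hK, ENNReal.mul_rpow_of_nonneg _ _ hs.le]
          gcongr
  rw [one_div, Real.rpow_inv_le_iff_of_pos (by positivity) (by positivity) hs,
    ← ENNReal.ofReal_le_ofReal_iff (by positivity),
    ENNReal.ofReal_sum_of_nonneg fun _ _ => by positivity]
  simpa only [← ENNReal.ofReal_rpow_of_nonneg (norm_nonneg _) hs.le,
    ← ENNReal.ofReal_rpow_of_nonneg (mul_nonneg hK hweak) hs.le, ofReal_norm] using hsum

end Summing

section Restriction

lemma summingBoundWith_restrictionOp {n : ℕ} {P Q : ℝ≥0∞} [Fact (1 ≤ P)] [Fact (1 ≤ Q)]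
    {Ω A B : Set (En n)} {ν τ μ : Measure (En n)} {M M' : ℝ≥0} {K : ℝ}
    (h : HasEvalBound P Ω ν A M) (h' : HasEvalBound 1 Ω (τ.restrict A) B M')
    (hA : MeasurableSet A) (hAΩ : A ⊆ Ω) (hB : MeasurableSet B) (hBA : B ⊆ A) (hμB : μ B < ⊤)
    (hK : 0 ≤ K) (hMK : M * (M' * τ A) ≤ ENNReal.ofReal K) :
    SummingBoundWith 1 1
      ((h.mono hBA).restrictionOp (Q := Q) hB (hBA.trans hAΩ) hμB)
      (K * (μ B).toReal ^ (1 / Q.toReal)) := by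
  set b := M' * μ B ^ (1 / Q.toReal) with hb_def
  set σ : Measure A := b • τ.comap Subtype.val with hσ_def
  have hσ : σ Set.univ = b * τ A := by
    rw [hσ_def, Measure.smul_apply, comap_subtype_coe_apply hA, Set.image_univ, Subtype.range_coe,
      smul_eq_mul]
  have hcont (F : holoSubmodule n P Ω ν) : Continuous fun w : A => h.holoEval w F :=
    continuousOn_iff_continuous_domRestrict.1 ((differentiableOn_holoRep F).continuousOn.mono hAΩ)
  have hdom (F : holoSubmodule n P Ω ν) :
      ‖(h.mono hBA).restrictionOp (Q := Q) hB (hBA.trans hAΩ) hμB F‖ₑ ≤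
        ∫⁻ w, ‖h.holoEval w F‖ₑ ∂σ := by
    have hrep : ∀ w ∈ B, ‖holoRep F w‖ₑ ≤ M' * ∫⁻ z in A, ‖holoRep F z‖ₑ ∂τ := fun w hw => by
      simpa only [eLpNorm_one_eq_lintegral_enorm] using h' _ (differentiableOn_holoRep F) w hw
    refine ((h.mono hBA).enorm_restrictionOp_le hB (hBA.trans hAΩ) hμB hrep).trans_eq ?_
    rw [hσ_def, lintegral_smul_measure, smul_eq_mul, hb_def, mul_right_comm]
    simp only [HasEvalBound.holoEval_apply]
    rw [lintegral_subtype_comap hA fun z => ‖holoRep F z‖ₑ]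
  refine summingBoundWith_of_enorm_rpow_le_lintegral (σ := σ) one_pos h.enorm_holoEval_le
    (fun F => (hcont F).aemeasurable) (fun F => ?_) (by positivity) ?_
  · simpa only [ENNReal.rpow_one] using hdom F
  · rw [ENNReal.rpow_one, ENNReal.rpow_one, hσ, hb_def, mul_right_comm, ← mul_assoc,
      ENNReal.ofReal_mul hK, ← ENNReal.ofReal_rpow_of_nonneg ENNReal.toReal_nonneg (by positivity),
      ENNReal.ofReal_toReal hμB.ne]
    gcongr

variable {α r R : ℝ}

lemma exists_hasEvalBound_one (n : ℕ) (hα : -1 < α) (hrR : r < R) :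
    ∃ C > 0, ∀ a : En n, ‖a‖ < 1 →
      HasEvalBound 1 (bergmanBall a R) ((wMeas n α).restrict (bergmanBall a R)) (bergmanBall a r)
        (C * (1 - ‖a‖ ^ 2) ^ (-(n + 1 + α))).toNNReal := by
  obtain ⟨c, hc, _, _, hcomparable⟩ := exists_wMeas_restrict_bergmanBall_comparable n hα R
  set V := volume.real (ball (0 : En n) ((Real.tanh R - Real.tanh r) / 4))
  have hV : 0 < V := measureReal_ball_pos 0 (div_pos (sub_pos.2 (tanh_lt_tanh hrR)) four_pos)
  refine ⟨(c * V)⁻¹, by positivity, fun a ha g hg w hw => ?_⟩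
  have hσ := one_sub_norm_sq_pos ha
  have hconst : (c * V)⁻¹ * (1 - ‖a‖ ^ 2) ^ (-(n + 1 + α)) =
      (c * (1 - ‖a‖ ^ 2) ^ α * ((1 - ‖a‖ ^ 2) ^ (n + 1) * V))⁻¹ := by
    rw [Real.rpow_neg hσ.le, Real.rpow_add hσ, ← Nat.cast_add_one, Real.rpow_natCast, ← mul_inv]
    ring_nf
  have hpos : 0 < c * (1 - ‖a‖ ^ 2) ^ α * ((1 - ‖a‖ ^ 2) ^ (n + 1) * V) := by positivity
  rw [eLpNorm_one_eq_lintegral_enorm, ← ENNReal.ofReal, hconst, ENNReal.ofReal_inv_of_pos hpos,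
    ← ENNReal.mul_le_iff_le_inv (ENNReal.ofReal_pos.2 hpos).ne' ENNReal.ofReal_ne_top]
  calc ENNReal.ofReal (c * (1 - ‖a‖ ^ 2) ^ α * ((1 - ‖a‖ ^ 2) ^ (n + 1) * V)) * ‖g w‖ₑ
      = ENNReal.ofReal (c * (1 - ‖a‖ ^ 2) ^ α) *
          (ENNReal.ofReal ((1 - ‖a‖ ^ 2) ^ (n + 1)) * (ENNReal.ofReal V * ‖g w‖ₑ)) := by
        rw [ENNReal.ofReal_mul (q := (1 - ‖a‖ ^ 2) ^ (n + 1) * V) (by positivity),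
          ENNReal.ofReal_mul (q := V) (by positivity), mul_assoc, mul_assoc]
    _ ≤ ENNReal.ofReal (c * (1 - ‖a‖ ^ 2) ^ α) * ∫⁻ z in bergmanBall a R, ‖g z‖ₑ := by
        rw [ofReal_measureReal]
        gcongr
        exact enorm_mul_le_lintegral_bergmanBall ha hrR hw hg
    _ ≤ ∫⁻ z in bergmanBall a R, ‖g z‖ₑ ∂wMeas n α := by
        rw [← smul_eq_mul, ← lintegral_smul_measure]
        exact lintegral_mono' (hcomparable a ha).1 le_rfl

lemma exists_hasEvalBound (n : ℕ) (hα : -1 < α) (hrR : r < R) {P : ℝ≥0∞} (hP : 1 ≤ P) :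
    ∃ C > 0, ∀ a : En n, ‖a‖ < 1 →
      HasEvalBound P (bergmanBall a R) ((wMeas n α).restrict (bergmanBall a R)) (bergmanBall a r)
        (C * (1 - ‖a‖ ^ 2) ^ (-((n + 1 + α) / P.toReal))).toNNReal := by
  obtain ⟨C, hC, hbound⟩ := exists_hasEvalBound_one n hα hrR
  obtain ⟨V, hV, hvol⟩ := exists_wMeas_bergmanBall_le n hα R
  set t := 1 - 1 / P.toReal with ht_def
  refine ⟨C * V ^ t, by positivity, fun a ha g hg w hw => ?_⟩
  have hσ := one_sub_norm_sq_pos ha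
  have ht : 0 ≤ t := by
    rw [ht_def, one_div, ← ENNReal.toReal_inv, sub_nonneg]
    exact ENNReal.toReal_mono ENNReal.one_ne_top (ENNReal.inv_le_one.2 hP)
  have hB := (isOpen_bergmanBall ha R).measurableSet
  have hhölder := eLpNorm_le_eLpNorm_mul_rpow_measure_univ hP
    (hg.continuousOn.aestronglyMeasurable hB (μ := wMeas n α))
  rw [Measure.restrict_apply_univ, ENNReal.toReal_one, div_one, ← ht_def] at hhölder
  have hconst : C * (1 - ‖a‖ ^ 2) ^ (-(n + 1 + α)) * (V * (1 - ‖a‖ ^ 2) ^ (n + 1 + α)) ^ t =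
      C * V ^ t * (1 - ‖a‖ ^ 2) ^ (-((n + 1 + α) / P.toReal)) := by
    rw [Real.mul_rpow hV.le (by positivity), ← Real.rpow_mul hσ.le, mul_mul_mul_comm,
      ← Real.rpow_add hσ, ht_def]
    ring_nf
  calc ‖g w‖ₑ
      ≤ ENNReal.ofReal (C * (1 - ‖a‖ ^ 2) ^ (-(n + 1 + α))) *
          eLpNorm g 1 ((wMeas n α).restrict (bergmanBall a R)) := hbound a ha g hg w hw
    _ ≤ ENNReal.ofReal (C * (1 - ‖a‖ ^ 2) ^ (-(n + 1 + α))) *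
          (eLpNorm g P ((wMeas n α).restrict (bergmanBall a R)) *
            ENNReal.ofReal (V * (1 - ‖a‖ ^ 2) ^ (n + 1 + α)) ^ t) := by
        gcongr
        refine hhölder.trans ?_
        gcongr
        exact hvol a ha
    _ = ENNReal.ofReal (C * V ^ t * (1 - ‖a‖ ^ 2) ^ (-((n + 1 + α) / P.toReal))) *
          eLpNorm g P ((wMeas n α).restrict (bergmanBall a R)) := by
        rw [ENNReal.ofReal_rpow_of_nonneg (by positivity) ht, mul_left_comm,
          ← ENNReal.ofReal_mul (by positivity), hconst, mul_comm]

end Restriction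

theorem statement6_general (n : ℕ) {α r R : ℝ} (hα : -1 < α) (hrR : r < R) (P Q : ℝ≥0∞)
    [Fact (1 ≤ P)] [Fact (1 ≤ Q)] :
    ∃ C > (0 : ℝ), ∀ a ∈ unitBall n, ∀ μ : Measure (En n), μ (bergmanBall a r) < ⊤ →
      ∃ S : holoSubmodule n P (bergmanBall a R) ((wMeas n α).restrict (bergmanBall a R)) →ₗ[ℂ]
          Lp ℂ Q (μ.restrict (bergmanBall a r)),
        (∀ F g, DifferentiableOn ℂ g (bergmanBall a R) →
          F.1 =ᵐ[(wMeas n α).restrict (bergmanBall a R)] g →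
            S F =ᵐ[μ.restrict (bergmanBall a r)] g) ∧
        SummingBoundWith 1 1 S
          (C * (1 - ‖a‖ ^ 2) ^ (-((n + 1 + α) / P.toReal)) *
            (μ (bergmanBall a r)).toReal ^ (1 / Q.toReal)) := by
  obtain ⟨m, hrm, hmR⟩ := exists_between hrR
  obtain ⟨C₁, hC₁, heval⟩ := exists_hasEvalBound n hα hmR (P := P) Fact.out
  obtain ⟨C₂, hC₂, heval_one⟩ := exists_hasEvalBound_one n hα hrm
  obtain ⟨V, hV, hvol⟩ := exists_wMeas_bergmanBall_le n hα m
  refine ⟨C₁ * C₂ * V, by positivity, fun a ha μ hμ => ?_⟩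
  rw [unitBall, mem_ball_zero_iff] at ha
  have hA := heval a ha
  have hrmB : bergmanBall a r ⊆ bergmanBall a m := bergmanBall_subset_bergmanBall hrm.le
  have hmRB : bergmanBall a m ⊆ bergmanBall a R := bergmanBall_subset_bergmanBall hmR.le
  have hopen (ρ : ℝ) := (isOpen_bergmanBall ha ρ).measurableSet
  refine ⟨(hA.mono hrmB).restrictionOp (hopen r) (hrmB.trans hmRB) hμ, fun F g hg hFg =>
    (hA.mono hrmB).coeFn_restrictionOp (hopen r) (hrmB.trans hmRB) hμ hg hFg, ?_⟩
  have hσ := one_sub_norm_sq_pos ha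
  refine summingBoundWith_restrictionOp hA
    (fun g hg => heval_one a ha g (hg.mono hmRB)) (hopen m) hmRB (hopen r) hrmB hμ
      (by positivity) ?_
  calc ENNReal.ofReal (C₁ * (1 - ‖a‖ ^ 2) ^ (-((n + 1 + α) / P.toReal))) *
        (ENNReal.ofReal (C₂ * (1 - ‖a‖ ^ 2) ^ (-(n + 1 + α))) * wMeas n α (bergmanBall a m))
      ≤ ENNReal.ofReal (C₁ * (1 - ‖a‖ ^ 2) ^ (-((n + 1 + α) / P.toReal))) *
        (ENNReal.ofReal (C₂ * (1 - ‖a‖ ^ 2) ^ (-(n + 1 + α))) *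
          ENNReal.ofReal (V * (1 - ‖a‖ ^ 2) ^ (n + 1 + α))) := by
        gcongr
        exact hvol a ha
    _ = ENNReal.ofReal (C₁ * C₂ * V * (1 - ‖a‖ ^ 2) ^ (-((n + 1 + α) / P.toReal))) := by
        rw [← ENNReal.ofReal_mul (by positivity), ← ENNReal.ofReal_mul (by positivity),
          mul_mul_mul_comm C₂, ← Real.rpow_add hσ, neg_add_cancel, Real.rpow_zero]
        ring_nf

theorem statement6 (n : ℕ) (hn : 1 ≤ n) (p q α δ : ℝ)
    (hα : -1 < α) (hp : 1 ≤ p) (hq : 1 ≤ q) (hδ : 0 < δ)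
    [Fact (1 ≤ ENNReal.ofReal p)] [Fact (1 ≤ ENNReal.ofReal q)] :
    ∃ C > (0 : ℝ), ∀ a : ℕ → En n, IsLattice a δ →
      ∀ μ : Measure (En n), μ (unitBall n)ᶜ = 0 → ∀ k : ℕ,
        ENNReal.ofReal ((1 - ‖a k‖ ^ 2) ^ (-(((n : ℝ) + 1 + α) * q / p))) *
            μ (bergmanBall (a k) δ) < ⊤ →
          ∃ S : ↥(holoSubmodule n (ENNReal.ofReal p) (bergmanBall (a k) (3 * δ))
                ((wMeas n α).restrict (bergmanBall (a k) (3 * δ)))) →ₗ[ℂ]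
              Lp ℂ (ENNReal.ofReal q) (μ.restrict (bergmanBall (a k) δ)),
            RepRestriction n p q α δ μ (a k) ⇑S ∧
              SummingBoundWith 1 1 ⇑S
                (C * (1 - ‖a k‖ ^ 2) ^ (-(((n : ℝ) + 1 + α) / p)) *
                  (μ (bergmanBall (a k) δ)).toReal ^ (1 / q)) := by
  obtain ⟨C, hC, h⟩ := statement6_general n hα (by linarith : δ < 3 * δ) (ENNReal.ofReal p)
    (ENNReal.ofReal q)
  rw [ENNReal.toReal_ofReal (by linarith), ENNReal.toReal_ofReal (by linarith)] at h
  refine ⟨C, hC, fun a ha μ _ k hfin => h (a k) (ha.1 k) μ ?_⟩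
  have hσ := one_sub_norm_sq_pos (mem_ball_zero_iff.1 (ha.1 k))
  exact ENNReal.lt_top_of_mul_ne_top_right hfin.ne (ENNReal.ofReal_pos.2 (by positivity)).ne'
end
end
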